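/- arXiv:1711.07409 — 3 statements merged into one kernel-verified Lean document; each statement's English description precedes it below -/
import Mathlib

section
/- Let M be a TS-submodule of C_c^∞(k) or of C_b^∞(k^×). Then for every smooth character χ of T the χ-eigenspace M^{T,χ} is zero, and the space of S-invariants M^S is zero. Moreover, for every smooth character χ of T, the χ-eigenspace of T acting on the quotient C_b^∞(k^×)/C_c^∞(k^×) is one-dimensional. -/
noncomputable section

open scoped Classical

namespace PSW

/-! ### The affine group `λ.b : x ↦ λ·x + b` over a field `K`. -/

@[ext]
structure Aff (K : Type*) [Field K] where
  t : Kˣ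
  s : K

namespace Aff

variable {K : Type*} [Field K]

instance : Mul (Aff K) := ⟨fun g h => ⟨g.t * h.t, g.s + (g.t : K) * h.s⟩⟩
instance : One (Aff K) := ⟨⟨1, 0⟩⟩
instance : Inv (Aff K) := ⟨fun g => ⟨g.t⁻¹, -(((g.t⁻¹ : Kˣ) : K) * g.s)⟩⟩

@[simp] lemma mul_t (g h : Aff K) : (g * h).t = g.t * h.t := rfl
@[simp] lemma mul_s (g h : Aff K) : (g * h).s = g.s + (g.t : K) * h.s := rfl
@[simp] lemma one_t : (1 : Aff K).t = 1 := rfl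
@[simp] lemma one_s : (1 : Aff K).s = 0 := rfl
@[simp] lemma inv_t (g : Aff K) : (g⁻¹).t = g.t⁻¹ := rfl
@[simp] lemma inv_s (g : Aff K) : (g⁻¹).s = -(((g.t⁻¹ : Kˣ) : K) * g.s) := rfl

instance : Group (Aff K) where
  mul_assoc a b c := by
    ext
    · simp [mul_assoc]
    · simp only [mul_s, mul_t, Units.val_mul]; ring
  one_mul a := by ext <;> simp
  mul_one a := by ext <;> simp
  inv_mul_cancel a := by
    ext
    · simp
    · simp

/-- The element `x_λ` of the group `TS`. -/
def xT (u : Kˣ) : Aff K := ⟨u, 0⟩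

/-- The element `s_b` of the group `TS`. -/
def sS (b : K) : Aff K := ⟨1, b⟩

@[simp] lemma xT_t (u : Kˣ) : (xT u : Aff K).t = u := rfl
@[simp] lemma xT_s (u : Kˣ) : (xT u : Aff K).s = 0 := rfl
@[simp] lemma sS_t (b : K) : (sS b : Aff K).t = 1 := rfl
@[simp] lemma sS_s (b : K) : (sS b : Aff K).s = b := rfl

/-- `T ≅ k^×` as a subgroup of `TS`. -/
def xTHom : Kˣ →* Aff K where
  toFun := xT
  map_one' := rfl
  map_mul' u v := by ext <;> simp [xT]

@[simp] lemma xTHom_apply (u : Kˣ) : (xTHom u : Aff K) = xT u := rfl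

lemma mul_sS (g : Aff K) (b : K) : g * sS b = sS ((g.t : K) * b) * g := by
  ext
  · simp
  · simp [add_comm]

lemma sS_mul (b : K) (g : Aff K) : sS b * g = g * sS (((g.t⁻¹ : Kˣ) : K) * b) := by
  ext
  · simp
  · simp [Units.mul_inv_cancel_left, add_comm]

lemma aff_decomp (g : Aff K) : g = xT g.t * sS (((g.t⁻¹ : Kˣ) : K) * g.s) := by
  ext
  · simp
  · simp [Units.mul_inv_cancel_left]

instance [TopologicalSpace K] : TopologicalSpace (Aff K) :=
  TopologicalSpace.induced (fun g : Aff K => ((g.t, g.s) : Kˣ × K)) inferInstance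

end Aff

/-! ### Generalities on representations of a monoid on complex vector spaces. -/

namespace GRep

variable {G : Type*} [Monoid G]

section MonoidModules

variable {V W : Type*} [AddCommMonoid V] [Module ℂ V] [AddCommMonoid W] [Module ℂ W]

/-- A submodule invariant under the representation. -/
def Invariant (ρ : Representation ℂ G V) (U : Submodule ℂ V) : Prop :=
  ∀ (g : G) (v : V), v ∈ U → ρ g v ∈ U

/-- Equivariance of a linear map with respect to two representations. -/
def Equivariant (ρ : Representation ℂ G V) (σ : Representation ℂ G W) (f : V →ₗ[ℂ] W) : Prop :=
  ∀ (g : G) (v : V), f (ρ g v) = σ g (f v)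

/-- Isomorphism of representations. -/
def Iso (ρ : Representation ℂ G V) (σ : Representation ℂ G W) : Prop :=
  ∃ e : V ≃ₗ[ℂ] W, ∀ (g : G) (v : V), e (ρ g v) = σ g (e v)

/-- Irreducibility. -/
def Irred (ρ : Representation ℂ G V) : Prop :=
  Nontrivial V ∧ ∀ U : Submodule ℂ V, Invariant ρ U → U = ⊥ ∨ U = ⊤

/-- Subrepresentation on an invariant submodule. -/
def sub (ρ : Representation ℂ G V) {U : Submodule ℂ V} (hU : Invariant ρ U) :
    Representation ℂ G ↥U where
  toFun g := (ρ g).restrict fun v hv => hU g v hv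
  map_one' := by
    apply LinearMap.ext; intro v; apply Subtype.ext
    simp [LinearMap.restrict_apply]
  map_mul' g h := by
    apply LinearMap.ext; intro v; apply Subtype.ext
    simp [LinearMap.restrict_apply]

@[simp] lemma sub_apply (ρ : Representation ℂ G V) {U : Submodule ℂ V} (hU : Invariant ρ U)
    (g : G) (v : ↥U) : ((sub ρ hU g v : ↥U) : V) = ρ g (v : V) := rfl

lemma ker_invariant (ρ : Representation ℂ G V) (σ : Representation ℂ G W)
    (f : V →ₗ[ℂ] W) (hf : Equivariant ρ σ f) : Invariant ρ (LinearMap.ker f) := by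
  intro g v hv
  rw [LinearMap.mem_ker] at hv ⊢
  rw [hf g v, hv, map_zero]

lemma range_invariant (ρ : Representation ℂ G V) (σ : Representation ℂ G W)
    (f : V →ₗ[ℂ] W) (hf : Equivariant ρ σ f) : Invariant σ (LinearMap.range f) := by
  rintro g w ⟨v, rfl⟩
  exact ⟨ρ g v, hf g v⟩

lemma map_invariant (ρ : Representation ℂ G V) (σ : Representation ℂ G W)
    (f : V →ₗ[ℂ] W) (hf : Equivariant ρ σ f) (U : Submodule ℂ V) (hU : Invariant ρ U) :
    Invariant σ (U.map f) := by
  rintro g w ⟨v, hv, rfl⟩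
  exact ⟨ρ g v, hU g v hv, hf g v⟩

end MonoidModules

section GroupModules

variable {V W : Type*} [AddCommGroup V] [Module ℂ V] [AddCommGroup W] [Module ℂ W]

/-- Quotient representation. -/
def quot (ρ : Representation ℂ G V) (U : Submodule ℂ V) (hU : Invariant ρ U) :
    Representation ℂ G (V ⧸ U) where
  toFun g := U.mapQ U (ρ g) fun v hv => hU g v hv
  map_one' := by
    apply LinearMap.ext; intro x
    obtain ⟨v, rfl⟩ := Submodule.Quotient.mk_surjective U x
    simp [Submodule.mapQ_apply]
  map_mul' g h := by
    apply LinearMap.ext; intro x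
    obtain ⟨v, rfl⟩ := Submodule.Quotient.mk_surjective U x
    simp [Submodule.mapQ_apply]

@[simp] lemma quot_apply (ρ : Representation ℂ G V) (U : Submodule ℂ V) (hU : Invariant ρ U)
    (g : G) (v : V) :
    quot ρ U hU g (Submodule.Quotient.mk v) = Submodule.Quotient.mk (ρ g v) := rfl

/-- Subquotient representation on `B/A`. -/
def subquot (ρ : Representation ℂ G V) {A B : Submodule ℂ V}
    (hA : Invariant ρ A) (hB : Invariant ρ B) :
    Representation ℂ G (↥B ⧸ A.comap B.subtype) :=
  quot (sub ρ hB) (A.comap B.subtype) fun g v hv => hA g v.1 hv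

lemma mkQ_equivariant (ρ : Representation ℂ G V) (U : Submodule ℂ V) (hU : Invariant ρ U) :
    Equivariant ρ (quot ρ U hU) U.mkQ := by
  intro g v
  show Submodule.Quotient.mk (ρ g v) = quot ρ U hU g (Submodule.Quotient.mk v)
  rw [quot_apply]

end GroupModules

end GRep

/-! ### TS-modules: representations of the affine group. -/

/-- A `TS`-module structure on `V` is a representation of the group `TS ≅ Gl_a(1)`. -/
abbrev Rep (K : Type*) [Field K] (V : Type*) [AddCommGroup V] [Module ℂ V] :=
  Representation ℂ (Aff K) V

section RepDefs

open Aff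

variable {K : Type*} [Field K]
variable {V W : Type*} [AddCommGroup V] [Module ℂ V] [AddCommGroup W] [Module ℂ W]

/-- Smoothness: every vector has open stabilizer. -/
def IsSmoothRep [TopologicalSpace K] (ρ : Rep K V) : Prop :=
  ∀ v : V, IsOpen {g : Aff K | ρ g v = v}

/-- Smoothness of a `T`-module, i.e. of a representation of `T ≅ k^×`. -/
def TIsSmooth {X : Type*} [AddCommMonoid X] [Module ℂ X] [TopologicalSpace K]
    (τ : Representation ℂ Kˣ X) : Prop :=
  ∀ x : X, IsOpen {u : Kˣ | τ u x = x}

/-- Smooth character of `T ≅ k^×` (open kernel, equivalently locally constant). -/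
def SmoothMulChar [TopologicalSpace K] (χ : Kˣ →* ℂˣ) : Prop :=
  IsOpen {u : Kˣ | χ u = 1}

/-- The space `V^S` of `S`-invariants. -/
def sInv (ρ : Rep K V) : Submodule ℂ V where
  carrier := {v | ∀ b : K, ρ (sS b) v = v}
  zero_mem' := fun b => map_zero _
  add_mem' {a b} ha hb := fun c => by rw [map_add, ha c, hb c]
  smul_mem' c v hv := fun b => by rw [map_smul, hv b]

@[simp] lemma mem_sInv (ρ : Rep K V) (v : V) :
    v ∈ sInv ρ ↔ ∀ b : K, ρ (sS b) v = v := Iff.rfl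

/-- The `χ`-eigenspace `X^{T,χ}` of a `T`-module. -/
def tEigenT {X : Type*} [AddCommMonoid X] [Module ℂ X]
    (τ : Representation ℂ Kˣ X) (χ : Kˣ →* ℂˣ) : Submodule ℂ X where
  carrier := {x | ∀ u : Kˣ, τ u x = (χ u : ℂ) • x}
  zero_mem' := fun u => by simp
  add_mem' {a b} ha hb := fun u => by rw [map_add, ha u, hb u, smul_add]
  smul_mem' c x hx := fun u => by rw [map_smul, hx u]; exact smul_comm c ((χ u : ℂ)) x

@[simp] lemma mem_tEigenT {X : Type*} [AddCommMonoid X] [Module ℂ X]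
    (τ : Representation ℂ Kˣ X) (χ : Kˣ →* ℂˣ) (x : X) :
    x ∈ tEigenT τ χ ↔ ∀ u : Kˣ, τ u x = (χ u : ℂ) • x := Iff.rfl

/-- The `χ`-eigenspace `V^{T,χ}` of a `TS`-module. -/
def tEigen (ρ : Rep K V) (χ : Kˣ →* ℂˣ) : Submodule ℂ V := tEigenT (ρ.comp xTHom) χ

/-- The kernel of the projection to the `S`-coinvariants `V_S`. -/
def sCoinvKer (ρ : Rep K V) : Submodule ℂ V :=
  Submodule.span ℂ {w : V | ∃ (b : K) (v : V), w = ρ (sS b) v - v}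

/-- The kernel of the projection to the twisted coinvariants `V_{S,ψ'}`. -/
def sTwistKer (ρ : Rep K V) (ψ' : AddChar K ℂ) : Submodule ℂ V :=
  Submodule.span ℂ {w : V | ∃ (b : K) (v : V), w = ρ (sS b) v - ψ' b • v}

/-- The kernel of the projection to the `χ`-coinvariants `X_{T,χ}` of a `T`-module. -/
def tTwistKerT {X : Type*} [AddCommGroup X] [Module ℂ X]
    (τ : Representation ℂ Kˣ X) (χ : Kˣ →* ℂˣ) : Submodule ℂ X :=
  Submodule.span ℂ {w : X | ∃ (u : Kˣ) (x : X), w = τ u x - (χ u : ℂ) • x}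

/-- The kernel of the projection to the `χ`-coinvariants `V_{T,χ}` of a `TS`-module. -/
def tTwistKer (ρ : Rep K V) (χ : Kˣ →* ℂˣ) : Submodule ℂ V := tTwistKerT (ρ.comp xTHom) χ

lemma sCoinvKer_invariant (ρ : Rep K V) : GRep.Invariant ρ (sCoinvKer ρ) := by
  intro g v hv
  have h : sCoinvKer ρ ≤ Submodule.comap (ρ g) (sCoinvKer ρ) := by
    refine Submodule.span_le.2 ?_
    rintro w ⟨b, v', rfl⟩
    simp only [SetLike.mem_coe, Submodule.mem_comap, map_sub]
    have h1 : ρ g (ρ (sS b) v') = ρ (sS ((g.t : K) * b)) (ρ g v') := by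
      rw [← Module.End.mul_apply, ← map_mul, mul_sS, map_mul, Module.End.mul_apply]
    rw [h1]
    exact Submodule.subset_span ⟨(g.t : K) * b, ρ g v', rfl⟩
  exact h hv

lemma sInv_invariant (ρ : Rep K V) : GRep.Invariant ρ (sInv ρ) := by
  intro g v hv
  rw [mem_sInv] at hv ⊢
  intro b
  have h1 : ρ (sS b) (ρ g v) = ρ g (ρ (sS (((g.t⁻¹ : Kˣ) : K) * b)) v) := by
    rw [← Module.End.mul_apply, ← map_mul, sS_mul, map_mul, Module.End.mul_apply]
  rw [h1, hv _]

/-- The `S`-coinvariants `π₀(V) = V_S` as a `TS`-module (`S` acting trivially). -/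
def piZeroRep (ρ : Rep K V) : Rep K (V ⧸ sCoinvKer ρ) :=
  GRep.quot ρ (sCoinvKer ρ) (sCoinvKer_invariant ρ)

/-- The `S`-coinvariants `π₀(V) = V_S` as a `T`-module. -/
def piZeroT (ρ : Rep K V) : Representation ℂ Kˣ (V ⧸ sCoinvKer ρ) :=
  (piZeroRep ρ).comp xTHom

/-- The `T`-module structure on `κ(V) = V^S`. -/
def sInvT (ρ : Rep K V) : Representation ℂ Kˣ ↥(sInv ρ) :=
  (GRep.sub ρ (sInv_invariant ρ)).comp xTHom

/-- A `TS`-module is perfect if all its eigenspaces `V^{T,χ}` for smooth `χ` vanish. -/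
def Perfect [TopologicalSpace K] (ρ : Rep K V) : Prop :=
  ∀ χ : Kˣ →* ℂˣ, SmoothMulChar χ → tEigen ρ χ = ⊥

/-- A finite-dimensional `T`-module is cyclic if each generalized eigenspace is a single
Jordan block; equivalently all eigenspaces `X^{T,χ}` have dimension at most one. -/
def TCyclic {X : Type*} [AddCommGroup X] [Module ℂ X]
    (τ : Representation ℂ Kˣ X) : Prop :=
  ∀ χ : Kˣ →* ℂˣ, Module.finrank ℂ ↥(tEigenT τ χ) ≤ 1

lemma sCoinvKer_le_comap (ρ : Rep K V) (σ : Rep K W)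
    (f : V →ₗ[ℂ] W) (hf : GRep.Equivariant ρ σ f) :
    sCoinvKer ρ ≤ (sCoinvKer σ).comap f := by
  refine Submodule.span_le.2 ?_
  rintro w ⟨b, v, rfl⟩
  simp only [SetLike.mem_coe, Submodule.mem_comap, map_sub]
  rw [hf]
  exact Submodule.subset_span ⟨b, f v, rfl⟩

/-- The map induced by an equivariant map on the `S`-coinvariants `π₀`. -/
def piZeroMap (ρ : Rep K V) (σ : Rep K W) (f : V →ₗ[ℂ] W) (hf : GRep.Equivariant ρ σ f) :
    (V ⧸ sCoinvKer ρ) →ₗ[ℂ] (W ⧸ sCoinvKer σ) :=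
  Submodule.mapQ _ _ f (sCoinvKer_le_comap ρ σ f hf)

lemma piZeroMap_equivariant (ρ : Rep K V) (σ : Rep K W) (f : V →ₗ[ℂ] W)
    (hf : GRep.Equivariant ρ σ f) :
    GRep.Equivariant (piZeroRep ρ) (piZeroRep σ) (piZeroMap ρ σ f hf) := by
  intro g x
  obtain ⟨v, rfl⟩ := Submodule.Quotient.mk_surjective _ x
  show piZeroMap ρ σ f hf (piZeroRep ρ g (Submodule.Quotient.mk v))
      = piZeroRep σ g (piZeroMap ρ σ f hf (Submodule.Quotient.mk v))
  rw [show piZeroRep ρ g (Submodule.Quotient.mk v) = Submodule.Quotient.mk (ρ g v) from rfl]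
  rw [show piZeroMap ρ σ f hf (Submodule.Quotient.mk v) = Submodule.Quotient.mk (f v) from rfl]
  rw [show piZeroMap ρ σ f hf (Submodule.Quotient.mk (ρ g v))
      = Submodule.Quotient.mk (f (ρ g v)) from rfl]
  rw [show piZeroRep σ g (Submodule.Quotient.mk (f v)) = Submodule.Quotient.mk (σ g (f v)) from rfl]
  rw [hf]

lemma kappaImg_invariant (ρ : Rep K V) :
    GRep.Invariant (piZeroT ρ) ((sInv ρ).map (sCoinvKer ρ).mkQ) := by
  rintro u w ⟨v, hv, rfl⟩
  refine ⟨ρ (xT u) v, sInv_invariant ρ (xT u) v hv, ?_⟩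
  rfl

end RepDefs

/-! ### Composition series and degree. -/

/-- A composition series for a `TS`-module, witnessing finite length: a maximal chain of
invariant submodules (the subquotients are then irreducible). -/
structure CompSeries {K : Type*} [Field K] {V : Type*} [AddCommGroup V] [Module ℂ V]
    (ρ : Rep K V) where
  n : ℕ
  W : ℕ → Submodule ℂ V
  bot : W 0 = ⊥
  top : W n = ⊤
  inv : ∀ i, GRep.Invariant ρ (W i)
  lt : ∀ i < n, W i < W (i + 1)
  maximal : ∀ i < n, ∀ C : Submodule ℂ V, GRep.Invariant ρ C → W i ≤ C → C ≤ W (i + 1) →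
    C = W i ∨ C = W (i + 1)

/-- The number of Jordan–Hölder constituents of a composition series isomorphic to a given
representation `σ` (applied with `σ = 𝕊`, this is the degree). -/
def CompSeries.deg {K : Type*} [Field K] {V : Type*} [AddCommGroup V] [Module ℂ V]
    {ρ : Rep K V} (c : CompSeries ρ) {W₀ : Type*} [AddCommMonoid W₀] [Module ℂ W₀]
    (σ : Representation ℂ (Aff K) W₀) : ℕ :=
  (Finset.univ.filter fun i : Fin c.n =>
    GRep.Iso (GRep.subquot ρ (c.inv i.1) (c.inv (i.1 + 1))) σ).card

/-! ### Fiber products of a `T`-module with a `TS`-module over a `T`-module. -/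

section Fiber

open Aff

variable {K : Type*} [Field K]
variable {X Y E : Type*} [AddCommGroup X] [Module ℂ X] [AddCommGroup Y] [Module ℂ Y]
  [AddCommGroup E] [Module ℂ E]

/-- The product `TS`-module `X × E` where `S` acts trivially on the `T`-module `X`. -/
def prodRepTE (τ : Representation ℂ Kˣ X) (ρ : Rep K E) : Rep K (X × E) where
  toFun g := (τ g.t).prodMap (ρ g)
  map_one' := by
    apply LinearMap.ext; rintro ⟨x, v⟩
    simp
  map_mul' g h := by
    apply LinearMap.ext; rintro ⟨x, v⟩
    simp [map_mul]

/-- The underlying space of the fiber product `𝔼[f] = X ×_Y E`. -/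
def fiberKer (f : X →ₗ[ℂ] Y) (q : E →ₗ[ℂ] Y) : Submodule ℂ (X × E) :=
  LinearMap.ker (f.comp (LinearMap.fst ℂ X E) - q.comp (LinearMap.snd ℂ X E))

lemma mem_fiberKer (f : X →ₗ[ℂ] Y) (q : E →ₗ[ℂ] Y) (p : X × E) :
    p ∈ fiberKer f q ↔ f p.1 = q p.2 := by
  simp [fiberKer, sub_eq_zero]

lemma fiber_invariant (τX : Representation ℂ Kˣ X) (ρE : Rep K E)
    (τY : Representation ℂ Kˣ Y) (f : X →ₗ[ℂ] Y) (q : E →ₗ[ℂ] Y)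
    (hf : ∀ (u : Kˣ) (x : X), f (τX u x) = τY u (f x))
    (hq : sCoinvKer ρE ≤ LinearMap.ker q)
    (hqT : ∀ (u : Kˣ) (v : E), q (ρE (xT u) v) = τY u (q v)) :
    GRep.Invariant (prodRepTE τX ρE) (fiberKer f q) := by
  intro g p hp
  rw [mem_fiberKer] at hp ⊢
  have hsb : q (ρE (sS (((g.t⁻¹ : Kˣ) : K) * g.s)) p.2) = q p.2 := by
    have h1 : ρE (sS (((g.t⁻¹ : Kˣ) : K) * g.s)) p.2 - p.2 ∈ sCoinvKer ρE :=
      Submodule.subset_span ⟨_, _, rfl⟩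
    have h2 := hq h1
    rw [LinearMap.mem_ker, map_sub, sub_eq_zero] at h2
    exact h2
  have hdecomp : ρE g p.2 = ρE (xT g.t) (ρE (sS (((g.t⁻¹ : Kˣ) : K) * g.s)) p.2) := by
    conv_lhs => rw [aff_decomp g]
    rw [map_mul, Module.End.mul_apply]
  have h1 : ((prodRepTE τX ρE) g p).1 = τX g.t p.1 := rfl
  have h2 : ((prodRepTE τX ρE) g p).2 = ρE g p.2 := rfl
  rw [h1, h2, hf, hp, hdecomp, hqT, hsb]

end Fiber

/-! ### Jordan blocks of finite-dimensional `T`-modules. -/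

section Jordan

variable {K : Type*} [Field K]
variable {X : Type*} [AddCommGroup X] [Module ℂ X]

/-- A Jordan block of a `T`-module: a nonzero indecomposable invariant direct summand. -/
def IsJordanBlock (τ : Representation ℂ Kˣ X) (J : Submodule ℂ X) : Prop :=
  J ≠ ⊥ ∧ GRep.Invariant τ J ∧ (∃ C : Submodule ℂ X, GRep.Invariant τ C ∧ IsCompl J C) ∧
    ∀ A B : Submodule ℂ X, GRep.Invariant τ A → GRep.Invariant τ B → A ≤ J → B ≤ J →
      A ⊓ B = ⊥ → A ⊔ B = J → A = ⊥ ∨ B = ⊥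

end Jordan

/-! ### Invariants and coinvariants for a normal subgroup of an arbitrary group. -/

section Grp

variable {Γ : Type*} [Group Γ]
variable {V W : Type*} [AddCommGroup V] [Module ℂ V] [AddCommGroup W] [Module ℂ W]

/-- Invariants `V^N` under a subgroup `N`. -/
def grpInv (ρ : Representation ℂ Γ V) (N : Subgroup Γ) : Submodule ℂ V where
  carrier := {v | ∀ n ∈ N, ρ n v = v}
  zero_mem' := fun n _ => map_zero _
  add_mem' {a b} ha hb := fun n hn => by rw [map_add, ha n hn, hb n hn]
  smul_mem' c v hv := fun n hn => by rw [map_smul, hv n hn]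

@[simp] lemma mem_grpInv (ρ : Representation ℂ Γ V) (N : Subgroup Γ) (v : V) :
    v ∈ grpInv ρ N ↔ ∀ n ∈ N, ρ n v = v := Iff.rfl

/-- The kernel of the projection to the coinvariants `V_N` under a subgroup `N`. -/
def grpCoinvKer (ρ : Representation ℂ Γ V) (N : Subgroup Γ) : Submodule ℂ V :=
  Submodule.span ℂ {w : V | ∃ n ∈ N, ∃ v : V, w = ρ n v - v}

lemma grpInv_invariant (ρ : Representation ℂ Γ V) (N : Subgroup Γ) [hN : N.Normal] :
    GRep.Invariant ρ (grpInv ρ N) := by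
  intro γ v hv
  rw [mem_grpInv] at hv ⊢
  intro n hn
  have hmem : γ⁻¹ * n * γ ∈ N := by
    have := hN.conj_mem n hn γ⁻¹
    simpa using this
  have key : ρ n (ρ γ v) = ρ γ (ρ (γ⁻¹ * n * γ) v) := by
    rw [← Module.End.mul_apply, ← map_mul, ← Module.End.mul_apply, ← map_mul]
    congr 1
    group
  rw [key, hv _ hmem]

lemma grpCoinvKer_invariant (ρ : Representation ℂ Γ V) (N : Subgroup Γ) [hN : N.Normal] :
    GRep.Invariant ρ (grpCoinvKer ρ N) := by
  intro γ v hv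
  have h : grpCoinvKer ρ N ≤ Submodule.comap (ρ γ) (grpCoinvKer ρ N) := by
    refine Submodule.span_le.2 ?_
    rintro w ⟨n, hn, v', rfl⟩
    simp only [SetLike.mem_coe, Submodule.mem_comap, map_sub]
    have key : ρ γ (ρ n v') = ρ (γ * n * γ⁻¹) (ρ γ v') := by
      rw [← Module.End.mul_apply, ← map_mul, ← Module.End.mul_apply, ← map_mul]
      congr 1
      group
    rw [key]
    exact Submodule.subset_span ⟨γ * n * γ⁻¹, hN.conj_mem n hn γ, ρ γ v', rfl⟩
  exact h hv

/-- The map induced on `N`-invariants by an equivariant map. -/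
def grpInvRestrict (ρ : Representation ℂ Γ V) (σ : Representation ℂ Γ W) (N : Subgroup Γ)
    (f : V →ₗ[ℂ] W) (hf : GRep.Equivariant ρ σ f) : ↥(grpInv ρ N) →ₗ[ℂ] ↥(grpInv σ N) :=
  f.restrict (fun v hv => by
    rw [mem_grpInv] at hv ⊢
    intro n hn
    rw [← hf n v, hv n hn])

lemma grpCoinvKer_le_comap (ρ : Representation ℂ Γ V) (σ : Representation ℂ Γ W) (N : Subgroup Γ)
    (f : V →ₗ[ℂ] W) (hf : GRep.Equivariant ρ σ f) :
    grpCoinvKer ρ N ≤ (grpCoinvKer σ N).comap f := by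
  refine Submodule.span_le.2 ?_
  rintro w ⟨n, hn, v, rfl⟩
  simp only [SetLike.mem_coe, Submodule.mem_comap, map_sub]
  rw [hf]
  exact Submodule.subset_span ⟨n, hn, f v, rfl⟩

/-- The map induced on `N`-coinvariants by an equivariant map. -/
def grpCoinvMap (ρ : Representation ℂ Γ V) (σ : Representation ℂ Γ W) (N : Subgroup Γ)
    (f : V →ₗ[ℂ] W) (hf : GRep.Equivariant ρ σ f) :
    (V ⧸ grpCoinvKer ρ N) →ₗ[ℂ] (W ⧸ grpCoinvKer σ N) :=
  Submodule.mapQ _ _ f (grpCoinvKer_le_comap ρ σ N f hf)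

end Grp

/-! ### Tate L-factors of finite-dimensional `T`-modules. -/

section Lfactor

variable {K : Type*} [NontriviallyNormedField K]
variable {X : Type*} [AddCommGroup X] [Module ℂ X]

/-- The part of a `T`-module where the `χ`-twisted action is unramified
(trivial on the norm-one units). -/
def unrPart (τ : Representation ℂ Kˣ X) (χ : Kˣ →* ℂˣ) : Submodule ℂ X where
  carrier := {x | ∀ u : Kˣ, ‖(u : K)‖ = 1 → (χ u : ℂ) • τ u x = x}
  zero_mem' := fun u _ => by simp
  add_mem' {a b} ha hb := fun u hu => by rw [map_add, smul_add, ha u hu, hb u hu]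
  smul_mem' c x hx := fun u hu => by
    rw [map_smul, smul_comm, hx u hu]

lemma unrPart_stable (τ : Representation ℂ Kˣ X) (χ : Kˣ →* ℂˣ) (ϖ : Kˣ) :
    ∀ x ∈ unrPart τ χ, ((χ ϖ : ℂ) • τ ϖ) x ∈ unrPart τ χ := by
  intro x hx u hu
  have comm : τ u (τ ϖ x) = τ ϖ (τ u x) := by
    rw [← Module.End.mul_apply, ← map_mul, mul_comm, map_mul, Module.End.mul_apply]
  calc (χ u : ℂ) • τ u (((χ ϖ : ℂ) • τ ϖ) x)
      = (χ ϖ : ℂ) • ((χ u : ℂ) • τ u (τ ϖ x)) := by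
        rw [LinearMap.smul_apply, map_smul, smul_comm]
    _ = (χ ϖ : ℂ) • τ ϖ ((χ u : ℂ) • τ u x) := by rw [comm, map_smul]
    _ = ((χ ϖ : ℂ) • τ ϖ) x := by rw [hx u hu, LinearMap.smul_apply]

/-- The twisted uniformizer action on the unramified part. -/
def twistOp (τ : Representation ℂ Kˣ X) (χ : Kˣ →* ℂˣ) (ϖ : Kˣ) :
    ↥(unrPart τ χ) →ₗ[ℂ] ↥(unrPart τ χ) :=
  LinearMap.restrict ((χ ϖ : ℂ) • τ ϖ) (unrPart_stable τ χ ϖ)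

/-- The Tate `L`-factor `L(s, χ ⊗ X) = det(1 - q^{-s}·(χ·τ)(ϖ) | X^{unr,χ})⁻¹` of a
(finite-dimensional) `T`-module `X`, relative to a uniformizer `ϖ`. -/
def Lfactor (τ : Representation ℂ Kˣ X) (χ : Kˣ →* ℂˣ) (ϖ : Kˣ) (s : ℂ) : ℂ :=
  (LinearMap.det (LinearMap.id - (‖(ϖ : K)‖ : ℂ) ^ s • twistOp τ χ ϖ))⁻¹

end Lfactor

/-! ### The concrete `TS`-modules `𝕊`, `C_c^∞(k)`, `C_b^∞(k^×)` and `𝔼[χ]`. -/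

section Concrete

open Aff

variable (K : Type*) [NontriviallyNormedField K]

/-- The representation of `TS` on functions on `k^×`:
`(s_b g)(x) = ψ(bx) g(x)`, `(x_λ g)(x) = g(xλ)`. -/
def repCx (ψ : AddChar K ℂ) : Rep K (Kˣ → ℂ) where
  toFun g :=
    { toFun := fun f x => ψ (g.s * (x : K)) * f (x * g.t)
      map_add' := fun f₁ f₂ => by funext x; simp [mul_add]
      map_smul' := fun c f => by
        funext x
        simp only [Pi.smul_apply, smul_eq_mul, RingHom.id_apply]
        ring }
  map_one' := by
    apply LinearMap.ext; intro f; funext x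
    simp
  map_mul' g h := by
    apply LinearMap.ext; intro f; funext x
    show ψ ((g.s + (g.t : K) * h.s) * (x : K)) * f (x * (g.t * h.t))
        = ψ (g.s * (x : K)) * (ψ (h.s * ((x * g.t : Kˣ) : K)) * f (x * g.t * h.t))
    have harg : (g.s + (g.t : K) * h.s) * (x : K)
        = g.s * (x : K) + h.s * ((x * g.t : Kˣ) : K) := by
      push_cast
      ring
    rw [harg, AddChar.map_add_eq_mul, ← mul_assoc x g.t h.t]
    ring

@[simp] lemma repCx_apply (ψ : AddChar K ℂ) (g : Aff K) (f : Kˣ → ℂ) (x : Kˣ) :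
    repCx K ψ g f x = ψ (g.s * (x : K)) * f (x * g.t) := rfl

/-- The `χ`-twisted representation of `TS` on functions on `k`:
`(s_b g)(x) = ψ(bx) g(x)`, `(x_λ g)(x) = χ(λ) g(xλ)`.  (Take `χ = 1` for the
untwisted action on `C_c^∞(k)`; the module `𝔼[χ]` is `C_c^∞(k)` with the twisted action.) -/
def repCc (ψ : AddChar K ℂ) (χ : Kˣ →* ℂˣ) : Rep K (K → ℂ) where
  toFun g :=
    { toFun := fun f x => (χ g.t : ℂ) * ψ (g.s * x) * f (x * (g.t : K))
      map_add' := fun f₁ f₂ => by funext x; simp [mul_add]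
      map_smul' := fun c f => by
        funext x
        simp only [Pi.smul_apply, smul_eq_mul, RingHom.id_apply]
        ring }
  map_one' := by
    apply LinearMap.ext; intro f; funext x
    simp
  map_mul' g h := by
    apply LinearMap.ext; intro f; funext x
    show (χ (g.t * h.t) : ℂ) * ψ ((g.s + (g.t : K) * h.s) * x) * f (x * ((g.t * h.t : Kˣ) : K))
        = (χ g.t : ℂ) * ψ (g.s * x) * ((χ h.t : ℂ) * ψ (h.s * (x * (g.t : K)))
            * f (x * (g.t : K) * (h.t : K)))
    have harg : (g.s + (g.t : K) * h.s) * x = g.s * x + h.s * (x * (g.t : K)) := by ring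
    have harg2 : x * ((g.t * h.t : Kˣ) : K) = x * (g.t : K) * (h.t : K) := by
      push_cast
      ring
    rw [harg, harg2, AddChar.map_add_eq_mul, map_mul]
    push_cast
    ring

@[simp] lemma repCc_apply (ψ : AddChar K ℂ) (χ : Kˣ →* ℂˣ) (g : Aff K) (f : K → ℂ) (x : K) :
    repCc K ψ χ g f x = (χ g.t : ℂ) * ψ (g.s * x) * f (x * (g.t : K)) := rfl

/-- The one-dimensional `TS`-module `ℂ_χ` on which `S` acts trivially and `x_λ` by `χ(λ)`. -/
def chiRep (χ : Kˣ →* ℂˣ) : Rep K ℂ where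
  toFun g := (χ g.t : ℂ) • LinearMap.id
  map_one' := by
    apply LinearMap.ext; intro c
    simp
  map_mul' g h := by
    apply LinearMap.ext; intro c
    simp only [mul_t, map_mul, LinearMap.smul_apply, LinearMap.id_apply, Module.End.mul_apply,
      Units.val_mul, smul_eq_mul]
    ring

/-- `C_c^∞(k)`: locally constant, compactly supported functions on `k`. -/
def CcK : Submodule ℂ (K → ℂ) where
  carrier := {f | IsLocallyConstant f ∧ HasCompactSupport f}
  zero_mem' := ⟨IsLocallyConstant.const 0, by
    rw [hasCompactSupport_def]
    simp⟩
  add_mem' {a b} ha hb := ⟨ha.1.comp₂ hb.1 (· + ·), ha.2.add hb.2⟩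
  smul_mem' c f hf := by
    refine ⟨?_, hf.2.mono (Function.support_const_smul_subset c f)⟩
    exact hf.1.comp (fun z => c * z)

@[simp] lemma mem_CcK (f : K → ℂ) :
    f ∈ CcK K ↔ IsLocallyConstant f ∧ HasCompactSupport f := Iff.rfl

/-- `𝕊 = C_c^∞(k^×)`: locally constant, compactly supported functions on `k^×`. -/
def SSx : Submodule ℂ (Kˣ → ℂ) where
  carrier := {f | IsLocallyConstant f ∧ HasCompactSupport f}
  zero_mem' := ⟨IsLocallyConstant.const 0, by
    rw [hasCompactSupport_def]
    simp⟩
  add_mem' {a b} ha hb := ⟨ha.1.comp₂ hb.1 (· + ·), ha.2.add hb.2⟩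
  smul_mem' c f hf := by
    refine ⟨?_, hf.2.mono (Function.support_const_smul_subset c f)⟩
    exact hf.1.comp (fun z => c * z)

@[simp] lemma mem_SSx (f : Kˣ → ℂ) :
    f ∈ SSx K ↔ IsLocallyConstant f ∧ HasCompactSupport f := Iff.rfl

/-- `C_b^∞(k^×)`: locally constant functions on `k^×` whose support has compact closure
in `k`. -/
def Cb : Submodule ℂ (Kˣ → ℂ) where
  carrier := {f | IsLocallyConstant f ∧
    IsCompact (closure (((↑) : Kˣ → K) '' Function.support f))}
  zero_mem' := ⟨IsLocallyConstant.const 0, by simp⟩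
  add_mem' {a b} ha hb := by
    refine ⟨ha.1.comp₂ hb.1 (· + ·), ?_⟩
    refine IsCompact.of_isClosed_subset (ha.2.union hb.2) isClosed_closure ?_
    refine closure_minimal ?_ (ha.2.isClosed.union hb.2.isClosed)
    refine (Set.image_mono (Function.support_add _ _)).trans ?_
    rw [Set.image_union]
    exact Set.union_subset_union subset_closure subset_closure
  smul_mem' c f hf := by
    refine ⟨hf.1.comp (fun z => c * z), ?_⟩
    refine IsCompact.of_isClosed_subset hf.2 isClosed_closure ?_
    refine closure_mono ?_
    exact Set.image_mono (Function.support_const_smul_subset c f)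

@[simp] lemma mem_Cb (f : Kˣ → ℂ) :
    f ∈ Cb K ↔ IsLocallyConstant f ∧
      IsCompact (closure (((↑) : Kˣ → K) '' Function.support f)) := Iff.rfl

variable {K}

lemma SSx_invariant (ψ : AddChar K ℂ) (hψlc : IsLocallyConstant (⇑ψ)) :
    GRep.Invariant (repCx K ψ) (SSx K) := by
  rintro g f hf
  rw [mem_SSx] at hf ⊢
  obtain ⟨hlc, hcs⟩ := hf
  have heq : repCx K ψ g f
      = (fun x : Kˣ => ψ (g.s * (x : K))) * (f ∘ (Homeomorph.mulRight g.t)) := rfl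
  constructor
  · rw [heq]
    refine IsLocallyConstant.mul ?_ ?_
    · exact hψlc.comp_continuous (continuous_const.mul Units.continuous_val)
    · exact hlc.comp_continuous (Homeomorph.mulRight g.t).continuous
  · rw [heq]
    exact (hcs.comp_homeomorph (Homeomorph.mulRight g.t)).mul_left

lemma CcK_invariant (ψ : AddChar K ℂ) (hψlc : IsLocallyConstant (⇑ψ)) (χ : Kˣ →* ℂˣ) :
    GRep.Invariant (repCc K ψ χ) (CcK K) := by
  rintro g f hf
  rw [mem_CcK] at hf ⊢
  obtain ⟨hlc, hcs⟩ := hf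
  have hne : ((g.t : Kˣ) : K) ≠ 0 := g.t.ne_zero
  have heq : repCc K ψ χ g f
      = (fun x : K => (χ g.t : ℂ) * ψ (g.s * x)) * (f ∘ (Homeomorph.mulRight₀ (g.t : K) hne)) :=
    rfl
  constructor
  · rw [heq]
    refine IsLocallyConstant.mul ?_ ?_
    · exact ((hψlc.comp_continuous (continuous_const.mul continuous_id)).comp
        (fun z => (χ g.t : ℂ) * z))
    · exact hlc.comp_continuous (Homeomorph.mulRight₀ (g.t : K) hne).continuous
  · rw [heq]
    exact (hcs.comp_homeomorph (Homeomorph.mulRight₀ (g.t : K) hne)).mul_left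

/-- The `TS`-module `𝕊 = C_c^∞(k^×)`. -/
def SRep (ψ : AddChar K ℂ) (hψlc : IsLocallyConstant (⇑ψ)) : Rep K ↥(SSx K) :=
  GRep.sub (repCx K ψ) (SSx_invariant ψ hψlc)

/-- The `TS`-module `𝔼[χ]`, i.e. `C_c^∞(k)` with the `χ`-twisted action. -/
def ERep (ψ : AddChar K ℂ) (hψlc : IsLocallyConstant (⇑ψ)) (χ : Kˣ →* ℂˣ) : Rep K ↥(CcK K) :=
  GRep.sub (repCc K ψ χ) (CcK_invariant ψ hψlc χ)

/-- The `TS`-module `𝕊^s`, a direct sum of `s` copies of `𝕊`. -/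
def SRepPow (ψ : AddChar K ℂ) (hψlc : IsLocallyConstant (⇑ψ)) (s : ℕ) :
    Rep K (Fin s → ↥(SSx K)) where
  toFun g := LinearMap.pi fun i => (SRep ψ hψlc g).comp (LinearMap.proj i)
  map_one' := by
    apply LinearMap.ext; intro v; funext i
    simp
  map_mul' g h := by
    apply LinearMap.ext; intro v; funext i
    simp [map_mul]

/-- The submodule `E` of `C_b^∞(k^×)` consisting of functions which are `χ`-eigenvectors
modulo `𝕊`; the quotient `E/𝕊` is the `χ`-eigenspace of `C_b^∞(k^×)/𝕊`. -/
def quotEigen (ψ : AddChar K ℂ) (χ : Kˣ →* ℂˣ) : Submodule ℂ (Kˣ → ℂ) where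
  carrier := {f | f ∈ Cb K ∧ ∀ u : Kˣ, repCx K ψ (Aff.xT u) f - (χ u : ℂ) • f ∈ SSx K}
  zero_mem' := ⟨(Cb K).zero_mem, fun u => by simpa using (SSx K).zero_mem⟩
  add_mem' {a b} ha hb := by
    refine ⟨(Cb K).add_mem ha.1 hb.1, fun u => ?_⟩
    rw [map_add, smul_add, add_sub_add_comm]
    exact (SSx K).add_mem (ha.2 u) (hb.2 u)
  smul_mem' c f hf := by
    refine ⟨(Cb K).smul_mem c hf.1, fun u => ?_⟩
    rw [map_smul, smul_comm, ← smul_sub]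
    exact (SSx K).smul_mem c (hf.2 u)

/-- Evaluation at `0 ∈ k`, realizing the quotient map `𝔼[χ] → ℂ_χ` with kernel `𝕊`. -/
def ev0 : ↥(CcK K) →ₗ[ℂ] ℂ where
  toFun f := (f : K → ℂ) 0
  map_add' f g := rfl
  map_smul' c f := rfl

end Concrete

/-! ### The diagonal torus in GL(2). -/

section GL2

variable {K : Type*} [Field K]

/-- The diagonal element `diag(a, b)` of `GL(2, K)`. -/
def diagGL (a b : Kˣ) : Matrix.GeneralLinearGroup (Fin 2) K where
  val := Matrix.diagonal ![(a : K), (b : K)]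
  inv := Matrix.diagonal ![((a : K))⁻¹, ((b : K))⁻¹]
  val_inv := by
    ext i j
    fin_cases i <;> fin_cases j <;>
      simp [Matrix.mul_apply, Fin.sum_univ_two, Matrix.diagonal, Matrix.one_apply,
        a.ne_zero, b.ne_zero]
  inv_val := by
    ext i j
    fin_cases i <;> fin_cases j <;>
      simp [Matrix.mul_apply, Fin.sum_univ_two, Matrix.diagonal, Matrix.one_apply,
        a.ne_zero, b.ne_zero]

end GL2

section Statements

open Aff

variable {K : Type*} [NontriviallyNormedField K] [IsUltrametricDist K] [ProperSpace K]

/-!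
Restriction to `k^×` embeds `C_c^∞(k)` equivariantly into `C_b^∞(k^×)`, because `k^×` is dense in
`k`. A `T`-eigenfunction on `k^×` which is nonzero somewhere is nonzero everywhere, hence has
unbounded support, and an `S`-invariant function vanishes at `x` as soon as `ψ (b * x) ≠ 1` for
some `b`.

The quotient `C_b^∞(k^×) / 𝕊` is the space of germs at `0`. If the germ of `f` is a
`χ`-eigenvector, then the germ of `g = f / χ` is fixed by every translation, each equation
`g (x * u) = g x` holding on a neighbourhood of `0` that depends on `u`. Fix `ϖ` with `‖ϖ‖ < 1` and
a ball on which `g (x * ϖ) = g x`. For `x` and `y` in this ball,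
`g y = g (y * ϖ ^ n) = g (x * ϖ ^ n) = g x` once `n` is large, the middle step being the equation
for `u = y / x`. So the germ of `f` is a multiple of the germ of `χ`, and the latter is realized by
the restriction of `χ` to the punctured unit ball.
-/

theorem isLocallyConstant_monoidHom_of_isOpen_ker {G H : Type*} [Group G] [TopologicalSpace G]
    [ContinuousMul G] [Group H] (φ : G →* H) (hφ : IsOpen {g | φ g = 1}) :
    IsLocallyConstant φ := by
  rw [IsLocallyConstant.iff_isOpen_fiber_apply]
  intro g
  have hfiber : φ ⁻¹' {φ g} = (g⁻¹ * ·) ⁻¹' {h | φ h = 1} := by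
    ext h
    change φ h = φ g ↔ φ (g⁻¹ * h) = 1
    rw [map_mul, map_inv, inv_mul_eq_one, eq_comm]
  exact hfiber ▸ hφ.preimage (continuous_const_mul g⁻¹)

section EquivariantMaps

variable {𝕜 V W : Type*} [Field 𝕜] [AddCommGroup V] [Module ℂ V] [AddCommGroup W] [Module ℂ W]
  {ρ : Rep 𝕜 V} {σ : Rep 𝕜 W} {f : V →ₗ[ℂ] W}

theorem map_tEigen_le (hf : GRep.Equivariant ρ σ f) (χ : 𝕜ˣ →* ℂˣ) :
    (tEigen ρ χ).map f ≤ tEigen σ χ := by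
  rintro _ ⟨v, hv, rfl⟩ u
  exact (hf (Aff.xT u) v).symm.trans ((congrArg f (hv u)).trans (f.map_smul _ v))

theorem map_sInv_le (hf : GRep.Equivariant ρ σ f) : (sInv ρ).map f ≤ sInv σ := by
  rintro _ ⟨v, hv, rfl⟩ b
  rw [← hf, hv]

end EquivariantMaps

section UnitsNearZero

open Filter Topology

variable (𝕜 : Type*) [NontriviallyNormedField 𝕜]

/-- The trace on `k^×` of the neighbourhood filter of `0` in `k`. Germs of functions on `k^×` along
this filter describe the quotient `C_b^∞(k^×) / 𝕊`. -/
def unitsNhdsZero : Filter 𝕜ˣ := comap Units.val (𝓝 0)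

theorem denseRange_units_val : DenseRange (Units.val : 𝕜ˣ → 𝕜) := by
  have hrange : Set.range (Units.val : 𝕜ˣ → 𝕜) = {0}ᶜ := by
    ext x
    exact isUnit_iff_ne_zero
  rw [DenseRange, hrange]
  exact dense_compl_singleton 0

instance unitsNhdsZero_neBot : (unitsNhdsZero 𝕜).NeBot :=
  comap_neBot fun _ hs => (denseRange_units_val 𝕜).exists_mem_open isOpen_interior
    ⟨0, mem_interior_iff_mem_nhds.2 hs⟩ |>.imp fun _ hu => interior_subset hu

variable {𝕜}

theorem unitsNhdsZero_hasBasis :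
    (unitsNhdsZero 𝕜).HasBasis (0 < ·) fun ε => {x : 𝕜ˣ | ‖(x : 𝕜)‖ < ε} := by
  refine (Metric.nhds_basis_ball.comap Units.val).congr (fun _ => Iff.rfl) fun ε _ => ?_
  ext x
  exact mem_ball_zero_iff

theorem tendsto_mul_const_unitsNhdsZero (u : 𝕜ˣ) :
    Tendsto (· * u) (unitsNhdsZero 𝕜) (unitsNhdsZero 𝕜) := by
  rw [unitsNhdsZero, tendsto_comap_iff]
  simpa [Function.comp_def] using
    (tendsto_comap (f := Units.val) (x := 𝓝 (0 : 𝕜))).mul_const (u : 𝕜)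

theorem tendsto_const_mul_pow_unitsNhdsZero (x : 𝕜ˣ) {ϖ : 𝕜ˣ} (hϖ : ‖(ϖ : 𝕜)‖ < 1) :
    Tendsto (fun n : ℕ => x * ϖ ^ n) atTop (unitsNhdsZero 𝕜) := by
  rw [unitsNhdsZero, tendsto_comap_iff]
  simpa [Function.comp_def] using
    (tendsto_pow_atTop_nhds_zero_of_norm_lt_one hϖ).const_mul (x : 𝕜)

theorem eventuallyConst_of_eventually_mul_right_eq {α : Type*} {g : 𝕜ˣ → α}
    (hg : ∀ u, ∀ᶠ x in unitsNhdsZero 𝕜, g (x * u) = g x) :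
    EventuallyConst g (unitsNhdsZero 𝕜) := by
  obtain ⟨p, hp_pos, hp_lt⟩ := NormedField.exists_norm_lt_one 𝕜
  lift p to 𝕜ˣ using (norm_pos_iff.1 hp_pos).isUnit with ϖ
  obtain ⟨ε, hε, hball⟩ := unitsNhdsZero_hasBasis.eventually_iff.1 (hg ϖ)
  have mul_pow_eq (x : 𝕜ˣ) (hx : ‖(x : 𝕜)‖ < ε) (n : ℕ) : g (x * ϖ ^ n) = g x := by
    induction n with
    | zero => simp
    | succ n ih =>
      have hxn : ‖((x * ϖ ^ n : 𝕜ˣ) : 𝕜)‖ < ε := by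
        rw [Units.val_mul, Units.val_pow_eq_pow_val, norm_mul, norm_pow]
        exact (mul_le_of_le_one_right (norm_nonneg _)
          (pow_le_one₀ (norm_nonneg _) hp_lt.le)).trans_lt hx
      rw [pow_succ, ← mul_assoc, hball hxn, ih]
  refine (unitsNhdsZero_hasBasis.eventuallyConst_iff).2 ⟨ε, hε, fun x hx y hy => ?_⟩
  obtain ⟨n, hn⟩ :=
    ((tendsto_const_mul_pow_unitsNhdsZero y hp_lt).eventually (hg (y⁻¹ * x))).exists
  calc
    g x = g (x * ϖ ^ n) := (mul_pow_eq x hx n).symm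
    _ = g (y * ϖ ^ n * (y⁻¹ * x)) := by congr 1; rw [mul_mul_mul_comm]; simp [mul_comm]
    _ = g (y * ϖ ^ n) := hn
    _ = g y := mul_pow_eq y hy n

end UnitsNearZero

section FunctionSpaces

open Filter Topology

variable {𝕜 : Type*} [NontriviallyNormedField 𝕜] {ψ : AddChar 𝕜 ℂ} {χ : 𝕜ˣ →* ℂˣ}
  {f g : 𝕜ˣ → ℂ}

theorem repCx_xT_apply (ψ : AddChar 𝕜 ℂ) (f : 𝕜ˣ → ℂ) (u x : 𝕜ˣ) :
    repCx 𝕜 ψ (Aff.xT u) f x = f (x * u) := by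
  simp

theorem Cb_disjoint_tEigen (ψ : AddChar 𝕜 ℂ) (χ : 𝕜ˣ →* ℂˣ) :
    Disjoint (Cb 𝕜) (tEigen (repCx 𝕜 ψ) χ) := by
  rw [Submodule.disjoint_def]
  intro f hf hfχ
  have map_mul_eq (x u : 𝕜ˣ) : f (x * u) = χ u * f x :=
    (repCx_xT_apply ψ f u x).symm.trans (congrFun (hfχ u) x)
  by_contra hne
  obtain ⟨x, hx⟩ := Function.ne_iff.1 hne
  have hsupport : Function.support f = Set.univ := by
    refine Set.eq_univ_of_forall fun y => ?_
    rw [Function.mem_support, ← mul_inv_cancel_left x y, map_mul_eq]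
    exact mul_ne_zero (Units.ne_zero _) hx
  have hcompact := hf.2
  rw [hsupport, Set.image_univ, (denseRange_units_val 𝕜).closure_range] at hcompact
  exact NormedSpace.unbounded_univ 𝕜 𝕜 hcompact.isBounded

theorem sInv_repCx_eq_bot (hψ : ψ ≠ 1) : sInv (repCx 𝕜 ψ) = ⊥ := by
  refine (Submodule.eq_bot_iff _).2 fun f hf => funext fun x => ?_
  obtain ⟨b, hb⟩ := AddChar.ne_one_iff.1 (AddChar.IsPrimitive.of_ne_one hψ x.ne_zero)
  rw [AddChar.mulShift_apply, mul_comm] at hb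
  have hinv : ψ (b * x) * f x = f x := by simpa using congrFun (hf b) x
  by_contra hne
  exact hb ((mul_eq_right₀ hne).1 hinv)

/-- Restriction of functions from `k` to `k^×`, which embeds `C_c^∞(k)` into `C_b^∞(k^×)`. -/
def restrictUnits (𝕜 : Type*) [NontriviallyNormedField 𝕜] : (𝕜 → ℂ) →ₗ[ℂ] (𝕜ˣ → ℂ) :=
  LinearMap.funLeft ℂ ℂ Units.val

theorem restrictUnits_equivariant (ψ : AddChar 𝕜 ℂ) :
    GRep.Equivariant (repCc 𝕜 ψ 1) (repCx 𝕜 ψ) (restrictUnits 𝕜) := by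
  intro a φ
  ext x
  simp [restrictUnits, LinearMap.funLeft_apply]

theorem restrictUnits_mem_Cb {φ : 𝕜 → ℂ} (hφ : φ ∈ CcK 𝕜) : restrictUnits 𝕜 φ ∈ Cb 𝕜 := by
  refine ⟨hφ.1.comp_continuous Units.continuous_val, hφ.2.isCompact.closure_of_subset ?_⟩
  rintro _ ⟨x, hx, rfl⟩
  exact subset_tsupport φ hx

theorem eq_zero_of_restrictUnits_eq_zero {φ : 𝕜 → ℂ} (hφ : IsLocallyConstant φ)
    (h : restrictUnits 𝕜 φ = 0) : φ = 0 :=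
  (denseRange_units_val 𝕜).equalizer hφ.continuous continuous_const h

theorem CcK_disjoint_of_map_restrictUnits_le {U : Submodule ℂ (𝕜 → ℂ)}
    {U' : Submodule ℂ (𝕜ˣ → ℂ)} (hU : U.map (restrictUnits 𝕜) ≤ U') (hU' : Disjoint (Cb 𝕜) U') :
    Disjoint (CcK 𝕜) U :=
  Submodule.disjoint_def.2 fun _ hφ hφU => eq_zero_of_restrictUnits_eq_zero hφ.1 <|
    Submodule.disjoint_def.1 hU' _ (restrictUnits_mem_Cb hφ) (hU ⟨_, hφU, rfl⟩)

theorem repCx_xT_mem_Cb (ψ : AddChar 𝕜 ℂ) (u : 𝕜ˣ) (hf : f ∈ Cb 𝕜) :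
    repCx 𝕜 ψ (Aff.xT u) f ∈ Cb 𝕜 := by
  have htranslate : repCx 𝕜 ψ (Aff.xT u) f = f ∘ (· * u) := funext (repCx_xT_apply ψ f u)
  rw [htranslate]
  refine ⟨hf.1.comp_continuous (continuous_mul_const u),
    (hf.2.image (continuous_mul_const (u⁻¹ : 𝕜))).closure_of_subset ?_⟩
  rintro _ ⟨x, hx, rfl⟩
  exact ⟨(x * u : 𝕜ˣ), subset_closure ⟨x * u, hx, rfl⟩, by simp⟩

theorem mem_SSx_iff_eventuallyEq_zero :
    f ∈ SSx 𝕜 ↔ f ∈ Cb 𝕜 ∧ f =ᶠ[unitsNhdsZero 𝕜] 0 := by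
  constructor
  · rintro ⟨hlc, hcs⟩
    have hcompact : IsCompact (Units.val '' tsupport f : Set 𝕜) :=
      hcs.isCompact.image Units.continuous_val
    refine ⟨⟨hlc, hcompact.closure_of_subset (Set.image_mono (subset_tsupport f))⟩, ?_⟩
    have hzero : (0 : 𝕜) ∉ Units.val '' tsupport f := fun ⟨x, _, hx⟩ => x.ne_zero hx
    filter_upwards [preimage_mem_comap (hcompact.isClosed.isOpen_compl.mem_nhds hzero)] with x hx
    exact image_eq_zero_of_notMem_tsupport fun hxf => hx ⟨x, hxf, rfl⟩
  · rintro ⟨⟨hlc, hcompact⟩, hzero⟩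
    obtain ⟨s, hs, hsf⟩ := mem_comap.1 hzero
    have hzero_notMem : (0 : 𝕜) ∉ closure (Units.val '' Function.support f) := by
      rw [mem_closure_iff_nhds]
      intro h
      obtain ⟨_, hxs, x, hx, rfl⟩ := h s hs
      exact hx (hsf hxs)
    have hrange : closure (Units.val '' Function.support f) ⊆ Set.range (Units.val : 𝕜ˣ → 𝕜) :=
      fun x hx => (ne_of_mem_of_not_mem hx hzero_notMem).isUnit
    exact ⟨hlc, HasCompactSupport.of_support_subset_isCompact
      ((Units.isEmbedding_val₀.isInducing.isCompact_preimage_iff hrange).2 hcompact)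
      fun x hx => subset_closure ⟨x, hx, rfl⟩⟩

theorem sub_mem_SSx_iff_eventuallyEq (hf : f ∈ Cb 𝕜) (hg : g ∈ Cb 𝕜) :
    f - g ∈ SSx 𝕜 ↔ f =ᶠ[unitsNhdsZero 𝕜] g := by
  rw [mem_SSx_iff_eventuallyEq_zero, and_iff_right ((Cb 𝕜).sub_mem hf hg),
    ← eventuallyEq_iff_sub]

theorem mem_quotEigen_iff :
    f ∈ quotEigen ψ χ ↔
      f ∈ Cb 𝕜 ∧ ∀ u, ∀ᶠ x in unitsNhdsZero 𝕜, f (x * u) = χ u * f x := by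
  refine and_congr_right fun hf => forall_congr' fun u => ?_
  rw [sub_mem_SSx_iff_eventuallyEq (repCx_xT_mem_Cb ψ u hf) ((Cb 𝕜).smul_mem _ hf)]
  simp only [EventuallyEq, repCx_xT_apply, Pi.smul_apply, smul_eq_mul]

theorem exists_eventuallyEq_smul_of_mem_quotEigen (hf : f ∈ quotEigen ψ χ) :
    ∃ c : ℂ, f =ᶠ[unitsNhdsZero 𝕜] fun x => c * χ x := by
  have hinv (u : 𝕜ˣ) : ∀ᶠ x in unitsNhdsZero 𝕜, f (x * u) / χ (x * u) = f x / χ x := by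
    filter_upwards [(mem_quotEigen_iff.1 hf).2 u] with x hx
    rw [hx, map_mul, Units.val_mul, mul_comm (χ x : ℂ),
      mul_div_mul_left _ _ (χ u).ne_zero]
  obtain ⟨c, hc⟩ := eventuallyConst_iff_exists_eventuallyEq.1
    (eventuallyConst_of_eventually_mul_right_eq (g := fun x => f x / χ x) hinv)
  exact ⟨c, hc.mono fun x hx => (div_eq_iff (χ x).ne_zero).1 hx⟩

/-- The restriction of `χ` to the punctured unit ball, extended by zero. Its germ at `0` spans the
`χ`-eigenspace of `C_b^∞(k^×) / 𝕊`. -/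
def unitBallChar (χ : 𝕜ˣ →* ℂˣ) : 𝕜ˣ → ℂ :=
  (Units.val ⁻¹' Metric.closedBall (0 : 𝕜) 1).indicator fun x => (χ x : ℂ)

theorem unitBallChar_eventuallyEq (χ : 𝕜ˣ →* ℂˣ) :
    unitBallChar χ =ᶠ[unitsNhdsZero 𝕜] fun x => (χ x : ℂ) := by
  filter_upwards [preimage_mem_comap (Metric.closedBall_mem_nhds (0 : 𝕜) one_pos)] with x hx
  exact Set.indicator_of_mem hx _

theorem unitBallChar_notMem_SSx (χ : 𝕜ˣ →* ℂˣ) : unitBallChar χ ∉ SSx 𝕜 := by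
  intro h
  obtain ⟨x, hx_zero, hx⟩ :=
    ((mem_SSx_iff_eventuallyEq_zero.1 h).2.and (unitBallChar_eventuallyEq χ)).exists
  exact (χ x).ne_zero (hx.symm.trans hx_zero)

theorem unitBallChar_mem_Cb [IsUltrametricDist 𝕜] [ProperSpace 𝕜] (hχ : SmoothMulChar χ) :
    unitBallChar χ ∈ Cb 𝕜 := by
  have hclopen : IsClopen (Units.val ⁻¹' Metric.closedBall (0 : 𝕜) 1 : Set 𝕜ˣ) :=
    (IsUltrametricDist.isClopen_closedBall (0 : 𝕜) one_ne_zero).preimage Units.continuous_val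
  have hlc : IsLocallyConstant fun x => (χ x : ℂ) :=
    (isLocallyConstant_monoidHom_of_isOpen_ker χ hχ).comp Units.val
  refine ⟨((⟨_, hlc⟩ : LocallyConstant 𝕜ˣ ℂ).indicator hclopen).isLocallyConstant,
    (isCompact_closedBall (0 : 𝕜) 1).closure_of_subset ?_⟩
  rintro _ ⟨x, hx, rfl⟩
  have hmem : x ∈ Units.val ⁻¹' Metric.closedBall (0 : 𝕜) 1 := Set.support_indicator_subset hx
  exact hmem

theorem mem_quotEigen_of_eventuallyEq (hf : f ∈ Cb 𝕜)
    (hfχ : f =ᶠ[unitsNhdsZero 𝕜] fun x => (χ x : ℂ)) : f ∈ quotEigen ψ χ := by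
  refine mem_quotEigen_iff.2 ⟨hf, fun u => ?_⟩
  filter_upwards [hfχ, (tendsto_mul_const_unitsNhdsZero u).eventually hfχ] with x hx hxu
  rw [hx, hxu, map_mul, Units.val_mul, mul_comm]

theorem finrank_quotEigen_quotient_SSx [IsUltrametricDist 𝕜] [ProperSpace 𝕜]
    (ψ : AddChar 𝕜 ℂ) (hχ : SmoothMulChar χ) :
    Module.finrank ℂ (quotEigen ψ χ ⧸ (SSx 𝕜).comap (quotEigen ψ χ).subtype) = 1 := by
  have hCb := unitBallChar_mem_Cb hχ
  let generator : quotEigen ψ χ :=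
    ⟨unitBallChar χ, mem_quotEigen_of_eventuallyEq hCb (unitBallChar_eventuallyEq χ)⟩
  refine finrank_eq_one (Submodule.Quotient.mk generator) ?_ fun w => ?_
  · rw [Ne, Submodule.Quotient.mk_eq_zero]
    exact unitBallChar_notMem_SSx χ
  · obtain ⟨f, rfl⟩ := Submodule.Quotient.mk_surjective _ w
    obtain ⟨c, hc⟩ := exists_eventuallyEq_smul_of_mem_quotEigen f.2
    refine ⟨c, (Submodule.Quotient.eq _).2 ?_⟩
    have hgerm : c • unitBallChar χ =ᶠ[unitsNhdsZero 𝕜] f :=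
      ((unitBallChar_eventuallyEq χ).const_smul c).trans hc.symm
    exact (sub_mem_SSx_iff_eventuallyEq ((Cb 𝕜).smul_mem c hCb) f.2.1).2 hgerm

end FunctionSpaces

theorem statement0_general (ψ : AddChar K ℂ) (hψ : ψ ≠ 1) (χ : Kˣ →* ℂˣ) :
    (∀ M : Submodule ℂ (K → ℂ), M ≤ CcK K →
      M ⊓ tEigen (repCc K ψ 1) χ = ⊥ ∧ M ⊓ sInv (repCc K ψ 1) = ⊥) ∧
    (∀ M : Submodule ℂ (Kˣ → ℂ), M ≤ Cb K →
      M ⊓ tEigen (repCx K ψ) χ = ⊥ ∧ M ⊓ sInv (repCx K ψ) = ⊥) ∧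
    (SmoothMulChar χ →
      Module.finrank ℂ (↥(quotEigen ψ χ) ⧸ (SSx K).comap (quotEigen ψ χ).subtype) = 1) := by
  have hCb_T : Disjoint (Cb K) (tEigen (repCx K ψ) χ) := Cb_disjoint_tEigen ψ χ
  have hCb_S : Disjoint (Cb K) (sInv (repCx K ψ)) := by
    rw [sInv_repCx_eq_bot hψ]
    exact disjoint_bot_right
  have hres := restrictUnits_equivariant ψ
  have hCcK_T : Disjoint (CcK K) (tEigen (repCc K ψ 1) χ) :=
    CcK_disjoint_of_map_restrictUnits_le (map_tEigen_le hres χ) hCb_T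
  have hCcK_S : Disjoint (CcK K) (sInv (repCc K ψ 1)) :=
    CcK_disjoint_of_map_restrictUnits_le (map_sInv_le hres) hCb_S
  exact ⟨fun M hM => ⟨(hCcK_T.mono_left hM).eq_bot, (hCcK_S.mono_left hM).eq_bot⟩,
    fun M hM => ⟨(hCb_T.mono_left hM).eq_bot, (hCb_S.mono_left hM).eq_bot⟩,
    finrank_quotEigen_quotient_SSx ψ⟩

theorem statement0
    (hchar : (2 : K) ≠ 0)
    (ψ : AddChar K ℂ) (hψlc : IsLocallyConstant (⇑ψ)) (hψne : ψ ≠ 1)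
    (χ : Kˣ →* ℂˣ) (hχ : SmoothMulChar χ) :
    (∀ M : Submodule ℂ (K → ℂ), GRep.Invariant (repCc K ψ 1) M → M ≤ CcK K →
      M ⊓ tEigen (repCc K ψ 1) χ = ⊥ ∧ M ⊓ sInv (repCc K ψ 1) = ⊥) ∧
    (∀ M : Submodule ℂ (Kˣ → ℂ), GRep.Invariant (repCx K ψ) M → M ≤ Cb K →
      M ⊓ tEigen (repCx K ψ) χ = ⊥ ∧ M ⊓ sInv (repCx K ψ) = ⊥) ∧
    Module.finrank ℂ (↥(quotEigen ψ χ) ⧸ (SSx K).comap (quotEigen ψ χ).subtype) = 1 := by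
  obtain ⟨hCcK, hCb, hquot⟩ := statement0_general ψ hψne χ
  exact ⟨fun M _ => hCcK M, fun M _ => hCb M, hquot hχ⟩

end Statements

end PSW
end
end

section
/- Every nonzero TS-submodule M of C_b^∞(k^×) contains 𝕊 = C_c^∞(k^×), and the action of S on the quotient M/𝕊 is trivial. -/
noncomputable section

open scoped Classical

namespace PSW

section Statements

open Aff

variable {K : Type*} [NontriviallyNormedField K] [IsUltrametricDist K] [ProperSpace K]

/-!
Multiplication by the characters `x ↦ ψ (b * x)` preserves `M`, and these functions separate the
points of `k`. On the relatively compact support of an element of `M` such a character takes only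
finitely many values, so Lagrange interpolation turns it into the indicator functions of its level
sets: restriction to any finite intersection of level sets preserves `M` as well. Let now `g ∈ 𝕊`
and `u ∈ k^×`. Translating a nonzero element of `M` gives `h ∈ M` with `h u = g u`. By compactness,
finitely many characters separate `u` from the support of `h - g`, so `h` and `g` agree on the
corresponding neighbourhood of `u`, and the restriction of `g` to it lies in `M`. Finitely many such
neighbourhoods cover the support of `g`, hence `g ∈ M`.

For the second claim, `s_b - 1` is multiplication by `x ↦ ψ (b * x) - 1`, which vanishes near `0`.
-/

open Topology Function

section Localizing

variable {R E X : Type*} [Ring R] [AddCommGroup E] [Module R E] {M : Submodule R (X → E)}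

/-- A set `T` is localizing for a space `M` of functions if restricting to `T` and extending by
zero maps `M` to itself. -/
def IsLocalizing (M : Submodule R (X → E)) (T : Set X) : Prop :=
  ∀ f ∈ M, T.indicator f ∈ M

namespace IsLocalizing

lemma empty : IsLocalizing M ∅ := fun f _ => by
  rw [Set.indicator_empty]
  exact M.zero_mem

lemma univ : IsLocalizing M Set.univ := fun f hf => by
  rwa [Set.indicator_univ]

lemma inter {S T : Set X} (hS : IsLocalizing M S) (hT : IsLocalizing M T) :
    IsLocalizing M (S ∩ T) := fun f hf => by
  rw [← Set.indicator_indicator]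
  exact hS _ (hT f hf)

lemma indicator_union_mem {S T : Set X} {g : X → E} (hS : IsLocalizing M S)
    (hgS : S.indicator g ∈ M) (hgT : T.indicator g ∈ M) : (S ∪ T).indicator g ∈ M := by
  rw [← add_sub_cancel_right ((S ∪ T).indicator g) ((S ∩ T).indicator g),
    Set.indicator_union_add_inter, ← Set.indicator_indicator]
  exact M.sub_mem (M.add_mem hgS hgT) (hS _ hgT)

lemma union {S T : Set X} (hS : IsLocalizing M S) (hT : IsLocalizing M T) :
    IsLocalizing M (S ∪ T) :=
  fun f hf => hS.indicator_union_mem (hS f hf) (hT f hf)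

lemma biInter {ι : Type*} (s : Finset ι) {T : ι → Set X} (hT : ∀ i, IsLocalizing M (T i)) :
    IsLocalizing M (⋂ i ∈ s, T i) := by
  induction s using Finset.induction_on with
  | empty => simpa using univ
  | insert i s _ ih =>
    rw [Finset.set_biInter_insert]
    exact (hT i).inter ih

lemma setOf_eq {𝕜 : Type*} [Field 𝕜] {M : Submodule 𝕜 (X → 𝕜)} {φ : X → 𝕜}
    (hφ : ∀ f ∈ M, φ * f ∈ M) (hfin : ∀ f ∈ M, (φ '' support f).Finite) (c : 𝕜) :
    IsLocalizing M {x | φ x = c} := by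
  intro f hf
  set s : Finset 𝕜 := insert c (hfin f hf).toFinset
  set p : Polynomial 𝕜 := Lagrange.basis s id c
  have hp : Polynomial.aeval φ p * f ∈ M :=
    Polynomial.aeval_apply_smul_mem_of_le_comap' hf p φ hφ
  convert hp using 1
  funext x
  have haeval : Polynomial.aeval φ p x = p.eval (φ x) := Polynomial.aeval_fn_apply p φ x
  rw [Pi.mul_apply, haeval]
  by_cases hx : φ x = c
  · have hone : p.eval c = 1 :=
      Lagrange.eval_basis_self injective_id.injOn (Finset.mem_insert_self _ _)
    rw [Set.indicator_of_mem (show x ∈ {x | φ x = c} from hx), hx, hone, one_mul]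
  · rw [Set.indicator_of_notMem (show x ∉ {x | φ x = c} from hx), eq_comm, mul_eq_zero]
    refine or_iff_not_imp_right.2 fun hfx => ?_
    have hmem : φ x ∈ s :=
      Finset.mem_insert_of_mem ((hfin f hf).mem_toFinset.2 (Set.mem_image_of_mem φ hfx))
    exact Lagrange.eval_basis_of_ne (v := id) (Ne.symm hx) hmem

end IsLocalizing

lemma mem_of_forall_exists_indicator_mem [TopologicalSpace X] {g : X → E}
    (hg : HasCompactSupport g)
    (hloc : ∀ x, ∃ T ∈ 𝓝 x, IsLocalizing M T ∧ T.indicator g ∈ M) : g ∈ M := by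
  have hcover : ∃ T, tsupport g ⊆ T ∧ IsLocalizing M T ∧ T.indicator g ∈ M := by
    refine hg.induction_on (p := fun s => ∃ T, s ⊆ T ∧ IsLocalizing M T ∧ T.indicator g ∈ M)
      ?_ ?_ ?_ ?_
    · exact ⟨∅, subset_rfl, .empty, by rw [Set.indicator_empty]; exact M.zero_mem⟩
    · rintro s t hst ⟨T, htT, hT⟩
      exact ⟨T, hst.trans htT, hT⟩
    · rintro s t ⟨S, hsS, hS, hgS⟩ ⟨T, htT, hT, hgT⟩
      exact ⟨S ∪ T, Set.union_subset_union hsS htT, hS.union hT, hS.indicator_union_mem hgS hgT⟩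
    · intro x _
      obtain ⟨T, hxT, hT⟩ := hloc x
      exact ⟨T, mem_nhdsWithin_of_mem_nhds hxT, T, subset_rfl, hT⟩
  obtain ⟨T, hgT, -, hmem⟩ := hcover
  rwa [Set.indicator_eq_self.2 ((subset_tsupport g).trans hgT)] at hmem

end Localizing

section Topology

lemma finite_image_of_isLocallyConstant {X Y : Type*} [TopologicalSpace X] {φ : X → Y}
    (hφ : IsLocallyConstant φ) {s : Set X} (hs : IsCompact s) : (φ '' s).Finite := by
  have := isCompact_iff_compactSpace.1 hs
  rw [Set.image_eq_range]
  exact (hφ.comp_continuous continuous_subtype_val).range_finite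

lemma isClosed_support_of_isLocallyConstant {X Y : Type*} [TopologicalSpace X] [Zero Y]
    {f : X → Y} (hf : IsLocallyConstant f) : IsClosed (support f) :=
  (hf.isOpen_fiber 0).isClosed_compl

lemma isLocallyConstant_comp_mul_left {S Y : Type*} [TopologicalSpace S] [Mul S]
    [SeparatelyContinuousMul S] {φ : S → Y} (hφ : IsLocallyConstant φ) (b : S) :
    IsLocallyConstant fun x => φ (b * x) :=
  hφ.comp_continuous (continuous_const_mul b)

variable {F : Type*} [GroupWithZero F] [TopologicalSpace F] [ContinuousInv₀ F]

lemma isCompact_preimage_unitsVal {C : Set F} (hC : IsCompact C) (h0 : (0 : F) ∉ C) :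
    IsCompact (((↑) : Fˣ → F) ⁻¹' C) := by
  rw [Units.isEmbedding_val₀.isCompact_iff, Set.image_preimage_eq_of_subset]
  · exact hC
  · intro x hx
    exact ⟨Units.mk0 x (ne_of_mem_of_not_mem hx h0), rfl⟩

lemma notMem_closure_image_support {Y : Type*} [Zero Y] {f : Fˣ → Y}
    (hf : IsLocallyConstant f) {u : Fˣ} (hu : f u = 0) :
    (u : F) ∉ closure (((↑) : Fˣ → F) '' support f) := by
  rw [← Set.mem_preimage,
    ← Units.isEmbedding_val₀.isInducing.closure_eq_preimage_closure_image,
    (isClosed_support_of_isLocallyConstant hf).closure_eq]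
  exact notMem_support.2 hu

end Topology

section Character

variable {F R : Type*} [Field F] [CommMonoid R] {ψ : AddChar F R}

lemma exists_addChar_mul_ne (hψ : ψ ≠ 1) {x y : F} (hxy : x ≠ y) :
    ∃ b, ψ (b * x) ≠ ψ (b * y) := by
  have hprim : ψ.IsPrimitive := .of_ne_one hψ
  obtain ⟨b, hb⟩ := DFunLike.ne_iff.1 ((AddChar.to_mulShift_inj_of_isPrimitive hprim).ne hxy)
  exact ⟨b, by simpa only [AddChar.mulShift_apply, mul_comm b] using hb⟩

lemma exists_finset_addChar_separating [TopologicalSpace F] [SeparatelyContinuousMul F]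
    (hψlc : IsLocallyConstant ψ) (hψ : ψ ≠ 1) {C : Set F} (hC : IsCompact C) {u : F}
    (hu : u ∉ C) : ∃ s : Finset F, C ∩ ⋂ b ∈ s, {x | ψ (b * x) = ψ (b * u)} = ∅ := by
  refine hC.elim_finite_subfamily_closed _
    (fun b => (isLocallyConstant_comp_mul_left hψlc b).isClosed_fiber _) ?_
  refine Set.eq_empty_of_forall_notMem fun x ⟨hxC, hx⟩ => ?_
  obtain ⟨b, hb⟩ := exists_addChar_mul_ne hψ (ne_of_mem_of_not_mem hxC hu)
  exact hb (Set.mem_iInter.1 hx b)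

end Character

section Submodules

variable {F : Type*} [NontriviallyNormedField F]

lemma repCx_sS (ψ : AddChar F ℂ) (b : F) (f : Fˣ → ℂ) :
    repCx F ψ (sS b) f = (fun x : Fˣ => ψ (b * x)) * f := by
  funext x
  simp

lemma SSx_le_Cb : SSx F ≤ Cb F := fun _ hf =>
  ⟨hf.1, (hf.2.isCompact.image Units.continuous_val).closure_of_subset
    (Set.image_mono (subset_tsupport _))⟩

lemma mul_mem_SSx {φ : F → ℂ} (hφ : IsLocallyConstant φ) (h0 : φ 0 = 0) {f : Fˣ → ℂ}
    (hf : f ∈ Cb F) : (fun x : Fˣ => φ x) * f ∈ SSx F := by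
  refine ⟨(hφ.comp_continuous Units.continuous_val).mul hf.1, ?_⟩
  have hcompact : IsCompact (closure (((↑) : Fˣ → F) '' support f) ∩ support φ) :=
    hf.2.inter_right (isClosed_support_of_isLocallyConstant hφ)
  refine .intro (isCompact_preimage_unitsVal hcompact fun h => h.2 h0) fun x hx => ?_
  by_contra hne
  obtain ⟨hφx, hfx⟩ := mul_ne_zero_iff.1 hne
  exact hx ⟨subset_closure (Set.mem_image_of_mem _ hfx), hφx⟩

lemma repCx_sS_sub_mem_SSx {ψ : AddChar F ℂ} (hψlc : IsLocallyConstant ψ) (b : F)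
    {f : Fˣ → ℂ} (hf : f ∈ Cb F) : repCx F ψ (sS b) f - f ∈ SSx F := by
  have hlc : IsLocallyConstant fun x => ψ (b * x) - 1 :=
    (isLocallyConstant_comp_mul_left hψlc b).comp (· - 1)
  have hmul : repCx F ψ (sS b) f - f = (fun x : Fˣ => ψ (b * x) - 1) * f := by
    rw [repCx_sS]
    exact (sub_one_mul _ f).symm
  rw [hmul]
  exact mul_mem_SSx hlc (by simp) hf

variable {ψ : AddChar F ℂ} {M : Submodule ℂ (Fˣ → ℂ)}

lemma exists_mem_apply_eq (hMi : GRep.Invariant (repCx F ψ) M) (hMne : M ≠ ⊥) (u : Fˣ) (c : ℂ) :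
    ∃ h ∈ M, h u = c := by
  obtain ⟨f, hf, hf0⟩ := Submodule.exists_mem_ne_zero_of_ne_bot hMne
  obtain ⟨v, hv : f v ≠ 0⟩ := ne_iff.1 hf0
  refine ⟨(c / f v) • repCx F ψ (xT (u⁻¹ * v)) f, M.smul_mem _ (hMi _ _ hf), ?_⟩
  simp [hv]

lemma isLocalizing_addChar_mul_eq (hψlc : IsLocallyConstant ψ)
    (hMi : GRep.Invariant (repCx F ψ) M) (hMle : M ≤ Cb F) (b : F) (c : ℂ) :
    IsLocalizing M {x : Fˣ | ψ (b * x) = c} := by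
  refine .setOf_eq (fun f hf => repCx_sS ψ b f ▸ hMi (sS b) f hf) (fun f hf => ?_) c
  refine (finite_image_of_isLocallyConstant (isLocallyConstant_comp_mul_left hψlc b)
    (hMle hf).2).subset ?_
  rintro _ ⟨x, hx, rfl⟩
  exact Set.mem_image_of_mem _ (subset_closure (Set.mem_image_of_mem _ hx))

lemma exists_isLocalizing_nhds_indicator_eq_zero (hψlc : IsLocallyConstant ψ) (hψne : ψ ≠ 1)
    (hMi : GRep.Invariant (repCx F ψ) M) (hMle : M ≤ Cb F) {f : Fˣ → ℂ} (hf : f ∈ Cb F)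
    {u : Fˣ} (hu : f u = 0) : ∃ T ∈ 𝓝 u, IsLocalizing M T ∧ T.indicator f = 0 := by
  obtain ⟨s, hs⟩ := exists_finset_addChar_separating hψlc hψne hf.2
    (notMem_closure_image_support hf.1 hu)
  refine ⟨⋂ b ∈ s, {x : Fˣ | ψ (b * x) = ψ (b * u)}, ?_,
    .biInter s fun b => isLocalizing_addChar_mul_eq hψlc hMi hMle b _, ?_⟩
  · refine (Filter.biInter_finset_mem s).2 fun b _ => ?_
    exact ((isLocallyConstant_comp_mul_left hψlc b).comp_continuous
      Units.continuous_val).eventually_eq u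
  · refine Set.indicator_eq_zero.2 (Set.disjoint_left.2 fun x hfx hx => ?_)
    have hmem : (x : F) ∈ closure (((↑) : Fˣ → F) '' support f) ∩
        ⋂ b ∈ s, {y | ψ (b * y) = ψ (b * u)} :=
      ⟨subset_closure (Set.mem_image_of_mem _ hfx), by simpa using hx⟩
    simp [hs] at hmem

lemma SSx_le_of_invariant (hψlc : IsLocallyConstant ψ) (hψne : ψ ≠ 1)
    (hMi : GRep.Invariant (repCx F ψ) M) (hMle : M ≤ Cb F) (hMne : M ≠ ⊥) : SSx F ≤ M := by
  intro g hg
  refine mem_of_forall_exists_indicator_mem hg.2 fun u => ?_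
  obtain ⟨h, hh, hu⟩ := exists_mem_apply_eq hMi hMne u (g u)
  obtain ⟨T, hTu, hT, hzero⟩ := exists_isLocalizing_nhds_indicator_eq_zero hψlc hψne hMi hMle
    ((Cb F).sub_mem (hMle hh) (SSx_le_Cb hg)) (sub_eq_zero.2 hu)
  have hgh : T.indicator g = T.indicator h := by
    rw [Set.indicator_sub', sub_eq_zero] at hzero
    exact hzero.symm
  exact ⟨T, hTu, hT, hgh ▸ hT h hh⟩

end Submodules

theorem statement1_general {F : Type*} [NontriviallyNormedField F]
    (ψ : AddChar F ℂ) (hψlc : IsLocallyConstant (⇑ψ)) (hψne : ψ ≠ 1)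
    (M : Submodule ℂ (Fˣ → ℂ)) (hMi : GRep.Invariant (repCx F ψ) M)
    (hMle : M ≤ Cb F) (hMne : M ≠ ⊥) :
    SSx F ≤ M ∧ ∀ b : F, ∀ f ∈ M, repCx F ψ (sS b) f - f ∈ SSx F :=
  ⟨SSx_le_of_invariant hψlc hψne hMi hMle hMne,
    fun b _ hf => repCx_sS_sub_mem_SSx hψlc b (hMle hf)⟩

theorem statement1
    (hchar : (2 : K) ≠ 0)
    (ψ : AddChar K ℂ) (hψlc : IsLocallyConstant (⇑ψ)) (hψne : ψ ≠ 1)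
    (M : Submodule ℂ (Kˣ → ℂ)) (hMi : GRep.Invariant (repCx K ψ) M)
    (hMle : M ≤ Cb K) (hMne : M ≠ ⊥) :
    SSx K ≤ M ∧ ∀ b : K, ∀ f ∈ M, repCx K ψ (sS b) f - f ∈ SSx K := by
  exact statement1_general ψ hψlc hψne M hMi hMle hMne

end Statements

end PSW
end
end

section
/- For every TS-module M one has M^S = ⋂_{ψ'≠1} ker(M → M_{S,ψ'}), the intersection over all nontrivial smooth characters ψ' of S. In other words, an element m ∈ M is invariant under S if and only if, for every nontrivial smooth character ψ' of S, m is a finite linear combination of elements of the form s·w − ψ'(s)·w with s ∈ S, w ∈ M. -/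
noncomputable section

open scoped Classical

namespace PSW

section Statements

open Aff

variable {K : Type*} [NontriviallyNormedField K] [IsUltrametricDist K] [ProperSpace K]

/-!
Every element of `S` lies in a compact subgroup, so its powers accumulate at the identity and some
positive power fixes any given vector of a smooth module. Let `v ≠ 0` be such a vector. The group
algebra `ℂ[S]` modulo the annihilator of `v` is generated by roots of unity, hence integral over
`ℂ`, so any maximal ideal containing the annihilator is the kernel of a character `χ` of `S`. It is
trivial on the stabilizer of `v`, hence smooth. On the other hand, every vector of the kernel of
`V → V_{S,χ}` is killed by some element of `ℂ[S]` on which `χ` does not vanish, so `v` is not in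
that kernel. This is applied to `v = s m - m`, which for trivial `χ` lies in the kernel anyway, and
for nontrivial `χ` does so as soon as `m` does.
-/

section AlgHom

lemma nonempty_algHom_of_isIntegral {k A : Type*} [Field k] [IsAlgClosed k] [CommRing A]
    [Nontrivial A] [Algebra k A] [Algebra.IsIntegral k A] : Nonempty (A →ₐ[k] k) := by
  obtain ⟨𝔪, h𝔪⟩ := Ideal.exists_maximal A
  exact ⟨(IsAlgClosed.lift : A ⧸ 𝔪 →ₐ[k] k).comp (Ideal.Quotient.mkₐ k 𝔪)⟩

lemma isIntegral_monoidAlgebra_quotient {k G : Type*} [CommRing k] [CommMonoid G]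
    {I : Ideal (MonoidAlgebra k G)}
    (hI : ∀ g : G, ∃ n > 0, MonoidAlgebra.of k G (g ^ n) - 1 ∈ I) :
    Algebra.IsIntegral k (MonoidAlgebra k G ⧸ I) := by
  refine ⟨Ideal.Quotient.mkₐ_surjective k I |>.forall.2 fun a => ?_⟩
  induction a using MonoidAlgebra.induction_on with
  | of g =>
    obtain ⟨n, hn, hg⟩ := hI g
    refine .of_pow hn ?_
    rw [← map_pow, ← map_pow, ← sub_add_cancel (MonoidAlgebra.of k G (g ^ n)) 1, map_add,
      Ideal.Quotient.mkₐ_eq_mk, Ideal.Quotient.eq_zero_iff_mem.2 hg, zero_add, map_one]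
    exact isIntegral_one
  | add a b ha hb => exact map_add (Ideal.Quotient.mkₐ k I) a b ▸ ha.add hb
  | smul c a ha => exact map_smul (Ideal.Quotient.mkₐ k I) c a ▸ ha.smul c

end AlgHom

section TwistedCoinvariants

open Function

variable {k G V : Type*} [CommRing k] [Monoid G] [AddCommGroup V] [Module k V]
  (ρ : Representation k G V)

/-- The kernel of the projection of a representation `V` of `G` to its `χ`-coinvariants, i.e. to
the largest quotient of `V` on which `G` acts through the character `χ`. -/
def twistedCoinvKer (χ : G →* k) : Submodule k V :=
  Submodule.span k {w | ∃ g v, w = ρ g v - χ g • v}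

variable {ρ}

lemma apply_sub_smul_mem_twistedCoinvKer (χ : G →* k) (g : G) (v : V) :
    ρ g v - χ g • v ∈ twistedCoinvKer ρ χ :=
  Submodule.subset_span ⟨g, v, rfl⟩

lemma apply_mem_twistedCoinvKer {χ : G →* k} {v : V} (hv : v ∈ twistedCoinvKer ρ χ) (g : G) :
    ρ g v ∈ twistedCoinvKer ρ χ := by
  rw [← sub_add_cancel (ρ g v) (χ g • v)]
  exact add_mem (apply_sub_smul_mem_twistedCoinvKer χ g v) (Submodule.smul_mem _ _ hv)

lemma asAlgebraHom_of_sub_algebraMap (g : G) (c : k) (v : V) :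
    ρ.asAlgebraHom (MonoidAlgebra.of k G g - algebraMap k _ c) v = ρ g v - c • v := by
  rw [map_sub, ρ.asAlgebraHom_of, AlgHom.commutes, LinearMap.sub_apply, Module.algebraMap_end_apply]

lemma exists_pow_apply_eq_of_mem_periodicPts {g : G} {v : V} (hv : v ∈ periodicPts (ρ g)) :
    ∃ n > 0, ρ (g ^ n) v = v := by
  obtain ⟨n, hn, hv⟩ := hv
  exact ⟨n, hn, by rw [map_pow, Module.End.pow_apply]; exact hv⟩

lemma mem_torsionOf_asModule {a : MonoidAlgebra k G} {v : V} :
    a ∈ Ideal.torsionOf (MonoidAlgebra k G) ρ.asModule (ρ.asModuleEquiv.symm v) ↔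
      ρ.asAlgebraHom a v = 0 :=
  Iff.rfl

end TwistedCoinvariants

section FieldCoefficients

open Function

variable {k G V : Type*} [Field k] [AddCommGroup V] [Module k V]

lemma invariants_le_twistedCoinvKer [Group G] {ρ : Representation k G V} {χ : G →* k}
    (hχ : χ ≠ 1) : ρ.invariants ≤ twistedCoinvKer ρ χ := by
  intro v hv
  obtain ⟨g, hg⟩ := DFunLike.ne_iff.1 hχ
  have hmem := apply_sub_smul_mem_twistedCoinvKer (ρ := ρ) χ g v
  rw [hv g, ← one_smul k v, smul_smul, mul_one, ← sub_smul] at hmem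
  exact (Submodule.smul_mem_iff _ (sub_ne_zero.2 (Ne.symm hg))).1 hmem

variable [CommMonoid G] {ρ : Representation k G V}

lemma exists_lift_eq_zero_of_asAlgebraHom_apply_eq_zero [IsAlgClosed k] {v : V} (hv : v ≠ 0)
    (hper : ∀ g, v ∈ periodicPts (ρ g)) :
    ∃ χ : G →* k, ∀ a, ρ.asAlgebraHom a v = 0 → MonoidAlgebra.lift k k G χ a = 0 := by
  let I := Ideal.torsionOf (MonoidAlgebra k G) ρ.asModule (ρ.asModuleEquiv.symm v)
  have : Algebra.IsIntegral k (MonoidAlgebra k G ⧸ I) := by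
    refine isIntegral_monoidAlgebra_quotient fun g => ?_
    obtain ⟨n, hn, hg⟩ := exists_pow_apply_eq_of_mem_periodicPts (hper g)
    refine ⟨n, hn, mem_torsionOf_asModule.2 ?_⟩
    simpa [sub_eq_zero] using hg
  have : Nontrivial (MonoidAlgebra k G ⧸ I) := by
    rw [Ideal.Quotient.nontrivial_iff, Ideal.ne_top_iff_one, mem_torsionOf_asModule]
    simpa using hv
  obtain ⟨f⟩ := nonempty_algHom_of_isIntegral (k := k) (A := MonoidAlgebra k G ⧸ I)
  refine ⟨(MonoidAlgebra.lift k k G).symm (f.comp (Ideal.Quotient.mkₐ k I)), fun a ha => ?_⟩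
  rw [Equiv.apply_symm_apply, AlgHom.comp_apply, Ideal.Quotient.mkₐ_eq_mk,
    Ideal.Quotient.eq_zero_iff_mem.2 (mem_torsionOf_asModule.2 ha), map_zero]

variable [CharZero k]

lemma exists_apply_sub_smul_eq_zero (χ : G →* k) {g : G} {v : V}
    (hv : v ∈ periodicPts (ρ g)) :
    ∃ a, MonoidAlgebra.lift k k G χ a ≠ 0 ∧
      ρ.asAlgebraHom a (ρ g v - χ g • v) = 0 := by
  obtain ⟨n, hn, hgv⟩ := exists_pow_apply_eq_of_mem_periodicPts hv
  let x := MonoidAlgebra.of k G g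
  let y := algebraMap k (MonoidAlgebra k G) (χ g)
  have hx : MonoidAlgebra.lift k k G χ x = χ g := MonoidAlgebra.lift_of ..
  have hy : MonoidAlgebra.lift k k G χ y = χ g := AlgHom.commutes ..
  simp_rw [← asAlgebraHom_of_sub_algebraMap, ← Module.End.mul_apply, ← map_mul]
  -- If `χ g ^ n = 1`, then `x ^ n - y ^ n` kills `v`; its quotient by `x - y` is a geometric sum,
  -- on which `χ` takes the value `n * χ g ^ (n - 1)`.
  by_cases hχ : χ g ^ n = 1
  · refine ⟨∑ i ∈ Finset.range n, x ^ i * y ^ (n - 1 - i), ?_, ?_⟩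
    · have hχg : χ g ≠ 0 := fun h => by simp [h, hn.ne'] at hχ
      simp_rw [map_sum, map_mul, map_pow, hx, hy]
      rw [geom_sum₂_self]
      exact mul_ne_zero (Nat.cast_ne_zero.2 hn.ne') (pow_ne_zero _ hχg)
    · rw [geom_sum₂_mul, ← map_pow, ← map_pow, asAlgebraHom_of_sub_algebraMap, hgv, hχ, one_smul,
        sub_self]
  · refine ⟨x ^ n - 1, ?_, ?_⟩
    · rw [map_sub, map_pow, hx, map_one]
      exact sub_ne_zero.2 hχ
    · have hxv : ρ.asAlgebraHom (x ^ n - 1) v = 0 := by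
        rw [← map_pow, ← map_one (algebraMap k _), asAlgebraHom_of_sub_algebraMap, hgv, one_smul,
          sub_self]
      rw [mul_comm, map_mul, Module.End.mul_apply, hxv, map_zero]

lemma exists_apply_eq_zero_of_mem_twistedCoinvKer (hρ : ∀ g v, v ∈ periodicPts (ρ g))
    {χ : G →* k} {v : V} (hv : v ∈ twistedCoinvKer ρ χ) :
    ∃ a, MonoidAlgebra.lift k k G χ a ≠ 0 ∧ ρ.asAlgebraHom a v = 0 := by
  induction hv using Submodule.span_induction with
  | mem _ h =>
    obtain ⟨g, v, rfl⟩ := h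
    exact exists_apply_sub_smul_eq_zero χ (hρ g v)
  | zero => exact ⟨1, by simp, map_zero _⟩
  | add v w _ _ hv hw =>
    obtain ⟨a, ha, hav⟩ := hv
    obtain ⟨b, hb, hbw⟩ := hw
    refine ⟨a * b, map_mul (MonoidAlgebra.lift k k G χ) a b ▸ mul_ne_zero ha hb, ?_⟩
    have hv : ρ.asAlgebraHom (a * b) v = 0 := by
      rw [mul_comm, map_mul, Module.End.mul_apply, hav, map_zero]
    have hw : ρ.asAlgebraHom (a * b) w = 0 := by
      rw [map_mul, Module.End.mul_apply, hbw, map_zero]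
    rw [map_add, hv, hw, add_zero]
  | smul c v _ hv =>
    obtain ⟨a, ha, hav⟩ := hv
    exact ⟨a, ha, by rw [map_smul, hav, smul_zero]⟩

theorem eq_zero_of_forall_mem_twistedCoinvKer [IsAlgClosed k]
    (hρ : ∀ g v, v ∈ periodicPts (ρ g)) {v : V}
    (hv : ∀ χ : G →* k, (∀ g, ρ g v = v → χ g = 1) → v ∈ twistedCoinvKer ρ χ) : v = 0 := by
  by_contra hv₀
  obtain ⟨χ, hχ⟩ := exists_lift_eq_zero_of_asAlgebraHom_apply_eq_zero hv₀ (hρ · v)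
  have hχ_stab : ∀ g, ρ g v = v → χ g = 1 := fun g hg => by
    simpa [sub_eq_zero, hg] using hχ (MonoidAlgebra.of k G g - 1)
  obtain ⟨a, ha, hav⟩ := exists_apply_eq_zero_of_mem_twistedCoinvKer hρ (hv χ hχ_stab)
  exact ha (hχ a hav)

end FieldCoefficients

section Smooth

open Filter Topology Function

lemma isLocallyConstant_of_eventually_eq_one {G M : Type*} [Group G] [TopologicalSpace G]
    [ContinuousMul G] [MulOneClass M] {χ : G →* M} (hχ : ∀ᶠ g in 𝓝 1, χ g = 1) :
    IsLocallyConstant χ := by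
  refine (IsLocallyConstant.iff_eventually_eq _).2 fun x => ?_
  have hx : Tendsto (x⁻¹ * ·) (𝓝 x) (𝓝 1) := by
    simpa using (continuous_const_mul x⁻¹).tendsto x
  filter_upwards [hx.eventually hχ] with y hy
  rw [← mul_inv_cancel_left x y, map_mul, hy, mul_one]

lemma mem_periodicPts_of_isOpen_stabilizer {k G V : Type*} [CommSemiring k] [Monoid G]
    [TopologicalSpace G] [AddCommMonoid V] [Module k V] {ρ : Representation k G V} {g : G}
    (hg : MapClusterPt 1 atTop (g ^ · : ℕ → G)) {v : V} (hv : IsOpen {h | ρ h v = v}) :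
    v ∈ periodicPts (ρ g) := by
  have hfreq := hg.frequently (hv.mem_nhds (by simp))
  obtain ⟨n, hgn, hn⟩ := (hfreq.and_eventually (eventually_gt_atTop 0)).exists
  refine mk_mem_periodicPts hn ?_
  rwa [map_pow, Module.End.pow_apply] at hgn

theorem mem_invariants_iff_forall_mem_twistedCoinvKer {k G V : Type*} [Field k] [IsAlgClosed k]
    [CharZero k] [CommGroup G] [TopologicalSpace G] [ContinuousMul G] [AddCommGroup V] [Module k V]
    {ρ : Representation k G V}
    (hG : ∀ g : G, MapClusterPt 1 atTop (g ^ · : ℕ → G))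
    (hρ : ∀ v, IsOpen {g | ρ g v = v}) {v : V} :
    v ∈ ρ.invariants ↔
      ∀ χ : G →* k, IsLocallyConstant χ → χ ≠ 1 → v ∈ twistedCoinvKer ρ χ := by
  refine ⟨fun hv χ _ hχ => invariants_le_twistedCoinvKer hχ hv, fun hv g => sub_eq_zero.1 ?_⟩
  have hper (g v) : v ∈ periodicPts (ρ g) := mem_periodicPts_of_isOpen_stabilizer (hG g) (hρ v)
  refine eq_zero_of_forall_mem_twistedCoinvKer hper fun χ hχ_stab => ?_
  obtain rfl | hχ_ne := eq_or_ne χ 1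
  · simpa using apply_sub_smul_mem_twistedCoinvKer 1 g v
  · have hχ : IsLocallyConstant χ := isLocallyConstant_of_eventually_eq_one <|
      mem_of_superset ((hρ (ρ g v - v)).mem_nhds (by simp : ρ 1 _ = _)) hχ_stab
    exact sub_mem (apply_mem_twistedCoinvKer (hv χ hχ hχ_ne) g) (hv χ hχ hχ_ne)

end Smooth

section Recurrence

open Filter

lemma mapClusterPt_zero_atTop_nsmul_of_mem_isCompact {E : Type*} [AddGroup E] [TopologicalSpace E]
    [IsTopologicalAddGroup E] {H : AddSubgroup E} (hH : IsCompact (H : Set E)) {b : E}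
    (hb : b ∈ H) : MapClusterPt 0 atTop (· • b : ℕ → E) := by
  have : CompactSpace H := isCompact_iff_compactSpace.1 hH
  exact (mapClusterPt_zero_atTop_nsmul (⟨b, hb⟩ : H)).continuousAt_comp
    continuous_subtype_val.continuousAt

lemma mapClusterPt_zero_atTop_nsmul_of_properSpace {E : Type*} [SeminormedAddCommGroup E]
    [IsUltrametricDist E] [ProperSpace E] (b : E) : MapClusterPt 0 atTop (· • b : ℕ → E) := by
  have hr : 0 < ‖b‖ + 1 := by positivity
  refine mapClusterPt_zero_atTop_nsmul_of_mem_isCompact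
    (H := (IsUltrametricDist.closedBall_openAddSubgroup E hr).toAddSubgroup)
    (isCompact_closedBall 0 (‖b‖ + 1)) ?_
  change b ∈ Metric.closedBall 0 (‖b‖ + 1)
  simp

end Recurrence

section Affine

open Filter

variable {F V : Type*} [Field F] [AddCommGroup V] [Module ℂ V]

/-- `S ≅ k` as a subgroup of `TS`, the additive group of `k` being written multiplicatively. -/
def sSHom : Multiplicative F →* Aff F where
  toFun b := sS b.toAdd
  map_one' := rfl
  map_mul' b c := by ext <;> simp

lemma continuous_sSHom [TopologicalSpace F] : Continuous (sSHom : Multiplicative F →* Aff F) :=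
  continuous_induced_rng.2 (continuous_const.prodMk continuous_toAdd)

/-- The restriction of a `TS`-module to `S`. -/
def sRestrict (ρ : Rep F V) : Representation ℂ (Multiplicative F) V := ρ.comp sSHom

lemma sInv_eq_invariants (ρ : Rep F V) : sInv ρ = (sRestrict ρ).invariants := rfl

lemma sTwistKer_eq_twistedCoinvKer (ρ : Rep F V) (ψ : AddChar F ℂ) :
    sTwistKer ρ ψ = twistedCoinvKer (sRestrict ρ) ψ.toMonoidHom := rfl

lemma mem_sInv_iff_forall_mem_sTwistKer [TopologicalSpace F] [ContinuousAdd F]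
    (hF : ∀ b : F, MapClusterPt 0 atTop (· • b : ℕ → F)) {ρ : Rep F V} (hρ : IsSmoothRep ρ)
    {m : V} :
    m ∈ sInv ρ ↔
      ∀ ψ : AddChar F ℂ, IsLocallyConstant ψ → ψ ≠ 1 → m ∈ sTwistKer ρ ψ := by
  have hsmooth (v : V) : IsOpen {b | sRestrict ρ b v = v} := (hρ v).preimage continuous_sSHom
  rw [sInv_eq_invariants, mem_invariants_iff_forall_mem_twistedCoinvKer hF hsmooth]
  refine AddChar.toMonoidHomMulEquiv.forall_congr_right.symm.trans (forall_congr' fun ψ => ?_)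
  rw [sTwistKer_eq_twistedCoinvKer]
  have hψ : AddChar.toMonoidHomMulEquiv ψ ≠ 1 ↔ ψ ≠ 1 := EmbeddingLike.map_ne_one_iff
  exact imp_congr Iff.rfl (imp_congr hψ Iff.rfl)

theorem statement2_general [TopologicalSpace F] [ContinuousAdd F]
    (hF : ∀ b : F, MapClusterPt 0 atTop (· • b : ℕ → F)) (ρ : Rep F V) (hρ : IsSmoothRep ρ) :
    sInv ρ = (⨅ (ψ' : AddChar F ℂ) (_ : IsLocallyConstant (⇑ψ')) (_ : ψ' ≠ 1),
      sTwistKer ρ ψ') ∧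
    ∀ m : V, m ∈ sInv ρ ↔
      ∀ ψ' : AddChar F ℂ, IsLocallyConstant (⇑ψ') → ψ' ≠ 1 → m ∈ sTwistKer ρ ψ' := by
  have hmem (m : V) := mem_sInv_iff_forall_mem_sTwistKer hF hρ (m := m)
  exact ⟨by ext m; simp only [hmem, Submodule.mem_iInf], hmem⟩

end Affine

theorem statement2
    (hchar : (2 : K) ≠ 0)
    {V : Type*} [AddCommGroup V] [Module ℂ V]
    (ρ : Rep K V) (hρ : IsSmoothRep ρ) :
    sInv ρ = (⨅ (ψ' : AddChar K ℂ) (_ : IsLocallyConstant (⇑ψ')) (_ : ψ' ≠ 1),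
      sTwistKer ρ ψ') ∧
    ∀ m : V, m ∈ sInv ρ ↔
      ∀ ψ' : AddChar K ℂ, IsLocallyConstant (⇑ψ') → ψ' ≠ 1 → m ∈ sTwistKer ρ ψ' :=
  statement2_general mapClusterPt_zero_atTop_nsmul_of_properSpace ρ hρ

end Statements

end PSW
end
end
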